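/- arXiv:2506.08816 — 2 statements merged into one kernel-verified Lean document; each statement's English description precedes it below -/
import Mathlib

section
/- Let d ∈ ℕ and let (X_i)_{i∈ℕ} be a strictly stationary sequence of S_d-valued random vectors satisfying assumptions (A2) (for some p ∈ (2,∞), sup_{i≠j} ‖h_{i,j}‖_p < ∞ where h_{i,j} = f_{X_i,X_j} − f_{X_i} f_{X_j} and the L^p norm is over S_d × S_d) and (A3) (α(m) ≪ m^{−ν} for some ν > 2(p−1)/(p−2)). Let q ∈ (1,2) satisfy 1/p + 1/q = 1, let s ∈ Int(S_d), and let b = b(n) → 0. With the choice β_n = min{⌈b^{−d/(νq)}⌉, n−1}, the total off-diagonal covariance sum satisfies Σ_{1 ≤ i ≠ j ≤ n} Cov(κ_{s,b}(X_i), κ_{s,b}(X_j)) = O_s(n b^{−d(1/p + 1/(νq))}) = o_s(n b^{−d/2}) as n → ∞. -/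
open MeasureTheory Filter Asymptotics Real Topology

noncomputable section

/-- The `d`-dimensional simplex `S_d = {s ∈ [0,1]^d : ‖s‖₁ ≤ 1}`. -/
def Sd (d : ℕ) : Set (Fin d → ℝ) :=
  {s | (∀ i, s i ∈ Set.Icc (0 : ℝ) 1) ∧ ∑ i, |s i| ≤ 1}

/-- The interior of the simplex, `Int(S_d) = {s ∈ (0,1)^d : ‖s‖₁ < 1}`. -/
def SdInt (d : ℕ) : Set (Fin d → ℝ) :=
  {s | (∀ i, s i ∈ Set.Ioo (0 : ℝ) 1) ∧ ∑ i, |s i| < 1}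

/-- The Dirichlet(u, v) density on the simplex, evaluated at `x`. -/
def dirK (d : ℕ) (u : Fin d → ℝ) (v : ℝ) (x : Fin d → ℝ) : ℝ :=
  (Real.Gamma (∑ i, u i + v) / (Real.Gamma v * ∏ i, Real.Gamma (u i))) *
    (1 - ∑ i, x i) ^ (v - 1) * ∏ i, (x i) ^ (u i - 1)

/-- The Dirichlet kernel `κ_{s,b} = K_{s/b+1, (1-‖s‖₁)/b+1}`. -/
def kappa (d : ℕ) (s : Fin d → ℝ) (b : ℝ) (x : Fin d → ℝ) : ℝ :=
  dirK d (fun i => s i / b + 1) ((1 - ∑ i, s i) / b + 1) x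

/-- `ψ(s) = (4π)^{-d/2} / ((1-‖s‖₁)^{1/2} ∏ s_i^{1/2})`. -/
def psiFun (d : ℕ) (s : Fin d → ℝ) : ℝ :=
  (4 * π) ^ (-(d : ℝ) / 2) /
    ((1 - ∑ i, s i) ^ ((1 : ℝ) / 2) * ∏ i, (s i) ^ ((1 : ℝ) / 2))

/-- The Dirichlet kernel density estimator `f̂_{n,b}(s)`. -/
def fhat {Ω : Type*} (d n : ℕ) (b : ℝ) (X : ℕ → Ω → (Fin d → ℝ))
    (s : Fin d → ℝ) (ω : Ω) : ℝ :=
  (n : ℝ)⁻¹ * ∑ i ∈ Finset.Icc 1 n, kappa d s b (X i ω)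

/-- The strong mixing (α-mixing) coefficient of the sequence `X`. -/
def alphaMix {Ω : Type*} [MeasurableSpace Ω] (P : Measure Ω)
    {d : ℕ} (X : ℕ → Ω → (Fin d → ℝ)) (m : ℕ) : ℝ :=
  sSup {r : ℝ | ∃ k : ℕ, 1 ≤ k ∧ ∃ A B : Set Ω,
    MeasurableSet[⨆ i ∈ Set.Icc 1 k, MeasurableSpace.comap (X i) inferInstance] A ∧
    MeasurableSet[⨆ i ∈ Set.Ici (k + m), MeasurableSpace.comap (X i) inferInstance] B ∧
    r = |(P (A ∩ B)).toReal - (P A).toReal * (P B).toReal|}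

/-- Strict stationarity of the sequence `X` (indexed from 1). -/
def IsStrictlyStationary {Ω : Type*} [MeasurableSpace Ω] (P : Measure Ω)
    {d : ℕ} (X : ℕ → Ω → (Fin d → ℝ)) : Prop :=
  ∀ k n : ℕ,
    Measure.map (fun ω => fun t : Fin n => X (t.1 + 1 + k) ω) P =
      Measure.map (fun ω => fun t : Fin n => X (t.1 + 1) ω) P

/-- Covariance of two real random variables. -/
def cov {Ω : Type*} [MeasurableSpace Ω] (P : Measure Ω) (Y Z : Ω → ℝ) : ℝ :=
  ∫ ω, Y ω * Z ω ∂P - (∫ ω, Y ω ∂P) * (∫ ω, Z ω ∂P)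

/-- The bias functional `g(s)` from Theorem MSE. -/
def gfun (d : ℕ) (f : (Fin d → ℝ) → ℝ) (s : Fin d → ℝ) : ℝ :=
  (∑ i, (1 - ((d : ℝ) + 1) * s i) * fderiv ℝ f s (Pi.single i 1)) +
    (1 / 2) * ∑ i, ∑ j, s i * ((if i = j then (1 : ℝ) else 0) - s j) *
      fderiv ℝ (fun t => fderiv ℝ f t (Pi.single i 1)) s (Pi.single j 1)

/-- The centered kernel variable `Ξ_{i,n}(s)`. -/
def Xi {Ω : Type*} [MeasurableSpace Ω] (P : Measure Ω) {d : ℕ}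
    (X : ℕ → Ω → (Fin d → ℝ)) (s : Fin d → ℝ) (b : ℝ) (i : ℕ) (ω : Ω) : ℝ :=
  kappa d s b (X i ω) - ∫ ω', kappa d s b (X i ω') ∂P

/-- The `j`-th big block of indices `I_j`. -/
def bigBlock (pn qn j : ℕ) : Finset ℕ :=
  Finset.Icc ((j - 1) * (pn + qn) + 1) ((j - 1) * (pn + qn) + pn)

/-- The `j`-th small block of indices `J_j`. -/
def smallBlock (pn qn j : ℕ) : Finset ℕ :=
  Finset.Icc ((j - 1) * (pn + qn) + pn + 1) (j * (pn + qn))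

/-- Assumption (A2): pairwise joint densities exist and the local dependence
functions `h_{i,j} = f_{X_i,X_j} - f_{X_i} f_{X_j}` have uniformly bounded `L^p` norms. -/
def AssumpA2 {Ω : Type*} [MeasurableSpace Ω] (P : Measure Ω) {d : ℕ}
    (X : ℕ → Ω → (Fin d → ℝ)) (f : (Fin d → ℝ) → ℝ) (p : ℝ) : Prop :=
  ∃ fpair : ℕ → ℕ → ((Fin d → ℝ) × (Fin d → ℝ)) → ℝ,
    (∀ i j : ℕ, 1 ≤ i → 1 ≤ j → i ≠ j →
      Measure.map (fun ω => (X i ω, X j ω)) P =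
        volume.withDensity (fun z => ENNReal.ofReal (fpair i j z))) ∧
    (∀ i j : ℕ, 1 ≤ i → 1 ≤ j → i ≠ j →
      Integrable (fun z => |fpair i j z - f z.1 * f z.2| ^ p)
        (volume.restrict (Sd d ×ˢ Sd d))) ∧
    ∃ C : ℝ, ∀ i j : ℕ, 1 ≤ i → 1 ≤ j → i ≠ j →
      (∫ z in Sd d ×ˢ Sd d, |fpair i j z - f z.1 * f z.2| ^ p) ^ (1 / p) ≤ C

/-- Stirling ratio `R(z) = √(2π) e^{-z} z^{z+1/2} / Γ(z+1)`. -/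
def Rfun (z : ℝ) : ℝ :=
  Real.sqrt (2 * π) * Real.exp (-z) * z ^ (z + 1 / 2) / Real.Gamma (z + 1)

end


lemma aux_factor_exp {x a b : ℝ} (hx0 : 0 ≤ x) (hx1 : x ≤ 1) (ha0 : 0 < a) (ha1 : a ≤ 1)
    (hb : 0 < b) :
    x ^ (a / b) ≤ a ^ (a / b) * Real.exp ((x - a) / b) * Real.exp (-(x - a) ^ 2 / (4 * b)) := by
  rcases hx0.eq_or_lt with h | h
  · rw [← h, Real.zero_rpow (by positivity)]
    positivity
  · rw [Real.rpow_def_of_pos h, Real.rpow_def_of_pos ha0, ← Real.exp_add, ← Real.exp_add]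
    apply Real.exp_le_exp.mpr
    have h1 : a * (Real.log x - Real.log a) ≤ (x - a) - (x - a) ^ 2 / 4 := by
      have h2 : Real.log x - Real.log a = 2 * (Real.log (√x / √a)) := by
        rw [Real.log_div (by positivity) (by positivity), Real.log_sqrt h.le, Real.log_sqrt ha0.le]
        ring
      have h3 : Real.log (√x / √a) ≤ √x / √a - 1 :=
        Real.log_le_sub_one_of_pos (by positivity)
      have h4 : a * (√x / √a) = √a * √x := by
        have : √a ≠ 0 := by positivity
        field_simp
        rw [Real.sq_sqrt ha0.le]
      have hsx : √x ≤ 1 := Real.sqrt_le_one.mpr hx1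
      have hsa : √a ≤ 1 := Real.sqrt_le_one.mpr ha1
      have hx2 := Real.sq_sqrt h.le
      have ha2 := Real.sq_sqrt ha0.le
      have h5 : (x - a) ^ 2 ≤ 4 * (√x - √a) ^ 2 := by
        have : x - a = (√x - √a) * (√x + √a) := by nlinarith
        rw [this, mul_pow]
        have : (√x + √a) ^ 2 ≤ 4 := by
          nlinarith [Real.sqrt_nonneg x, Real.sqrt_nonneg a]
        nlinarith [sq_nonneg (√x - √a)]
      rw [h2]
      have := mul_le_mul_of_nonneg_left h3 ha0.le
      nlinarith
    have h6 : Real.log x * (a / b) - Real.log a * (a / b) = (a * (Real.log x - Real.log a)) / b := by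
      ring
    have h7 : (x - a) / b + -(x - a) ^ 2 / (4 * b) = ((x - a) - (x - a) ^ 2 / 4) / b := by
      field_simp
      ring
    have h8 := div_le_div_of_nonneg_right h1 hb.le
    linarith

lemma aux_gamma_lower {z : ℝ} (hz : 0 < z) :
    Real.exp (-(1 / 2)) * (z ^ z * √z * Real.exp (-z)) ≤ Real.Gamma (z + 1) := by
  rw [Real.Gamma_eq_integral (by linarith)]
  have hint := Real.GammaIntegral_convergent (s := z + 1) (by linarith)
  have hsub : Set.Ioc z (z + √z) ⊆ Set.Ioi 0 := fun t ht => lt_trans hz ht.1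
  have h1 : ∫ t in Set.Ioc z (z + √z), Real.exp (-t) * t ^ (z + 1 - 1) ≤
      ∫ t in Set.Ioi (0:ℝ), Real.exp (-t) * t ^ (z + 1 - 1) := by
    apply setIntegral_mono_set hint
    · filter_upwards [ae_restrict_mem measurableSet_Ioi] with t ht
      have : (0:ℝ) < t := ht
      simp only [Pi.zero_apply]
      positivity
    · exact hsub.eventuallyLE
  refine le_trans ?_ h1
  have h2 : ∫ t in Set.Ioc z (z + √z), Real.exp (-(1 / 2)) * (z ^ z * Real.exp (-z)) ≤
      ∫ t in Set.Ioc z (z + √z), Real.exp (-t) * t ^ (z + 1 - 1) := by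
    apply setIntegral_mono_on _ (hint.mono_set hsub) measurableSet_Ioc
    · intro t ht
      have ht0 : 0 < t := hsub ht
      rw [Real.rpow_def_of_pos hz, Real.rpow_def_of_pos ht0, ← Real.exp_add, ← Real.exp_add,
        ← Real.exp_add]
      apply Real.exp_le_exp.mpr
      have hw0 : 0 ≤ (t - z) / z := div_nonneg (by linarith [ht.1]) hz.le
      have h3 := Real.le_log_one_add_of_nonneg hw0
      have h4 : 1 + (t - z) / z = t / z := by field_simp; ring
      rw [h4, Real.log_div ht0.ne' hz.ne'] at h3
      have h5 : (t - z) / z - ((t - z) / z) ^ 2 / 2 ≤ 2 * ((t - z) / z) / ((t - z) / z + 2) := by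
        rw [le_div_iff₀ (by linarith)]
        generalize (t - z) / z = w at hw0
        nlinarith [pow_nonneg hw0 3]
      have h6 : (t - z) ^ 2 ≤ z := by
        have : t - z ≤ √z := by linarith [ht.2]
        have h7 : 0 ≤ t - z := by linarith [ht.1]
        nlinarith [Real.sq_sqrt hz.le]
      have h8 : z * ((t - z) / z - ((t - z) / z) ^ 2 / 2) ≤ z * (Real.log t - Real.log z) :=
        mul_le_mul_of_nonneg_left (h5.trans h3) hz.le
      have h9 : z * ((t - z) / z - ((t - z) / z) ^ 2 / 2) = (t - z) - (t - z) ^ 2 / z / 2 := by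
        field_simp
      have h10 : (t - z) ^ 2 / z ≤ 1 := by rw [div_le_one hz]; exact h6
      ring_nf at *
      linarith
    · exact integrableOn_const (by simp)
  refine le_trans (le_of_eq ?_) h2
  simp [Real.sqrt_nonneg]
  ring

lemma aux_gamma_upper {z : ℝ} (hz : 1 ≤ z) :
    Real.Gamma (z + 1) ≤ (2 * Real.exp 1 ^ 2) * (z ^ z * √z * Real.exp (-z)) := by
  set n := ⌊z⌋₊ with hn
  have hn1 : 1 ≤ n := Nat.le_floor (by simpa using hz)
  have hn1' : (1:ℝ) ≤ n := by exact_mod_cast hn1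
  have hnz : (n:ℝ) ≤ z := Nat.floor_le (by linarith)
  have hzn : z < n + 1 := Nat.lt_floor_add_one z
  have hfac : (n.factorial : ℝ) ≤ Real.exp 1 * (√n * ((n:ℝ) ^ (n:ℝ) * Real.exp (-n))) := by
    have h := Stirling.stirlingSeq'_antitone (Nat.zero_le (n - 1))
    simp only [Function.comp, Nat.succ_eq_add_one, Nat.sub_add_cancel hn1, zero_add] at h
    rw [Stirling.stirlingSeq_one, Stirling.stirlingSeq, div_le_iff₀ (by positivity)] at h
    refine h.trans (le_of_eq ?_)
    rw [Real.rpow_natCast, div_pow, ← Real.exp_nat_mul, Real.exp_neg, Real.sqrt_mul (by norm_num)]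
    have : √(2:ℝ) ≠ 0 := by positivity
    field_simp
  have hG : Real.Gamma (z + 1) ≤ n.factorial * ((n:ℝ) + 1) ^ (z - n) := by
    rcases hnz.eq_or_lt with h | h
    · rw [← h]; simp [Real.Gamma_nat_eq_factorial]
    · have := Real.Gamma_mul_add_mul_le_rpow_Gamma_mul_rpow_Gamma (s := n + 1) (t := n + 2)
        (a := 1 - (z - n)) (b := z - n) (by positivity) (by positivity) (by linarith) (by linarith)
        (by ring)
      have e : (1 - (z - n)) * ((n:ℝ) + 1) + (z - n) * (n + 2) = z + 1 := by ring
      rw [e, Real.Gamma_nat_eq_factorial, show ((n:ℝ) + 2) = (n + 1) + 1 by ring,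
        Real.Gamma_add_one (s := (n:ℝ) + 1) (by positivity), Real.Gamma_nat_eq_factorial,
        Real.mul_rpow (by positivity) (by positivity)] at this
      refine this.trans (le_of_eq ?_)
      have hf : (0:ℝ) < n.factorial := by positivity
      rw [mul_left_comm, ← Real.rpow_add hf]
      simp [mul_comm]
  have hz0 : 0 < z := by linarith
  have h1 : ((n:ℝ) + 1) ^ (z - n) ≤ 2 * z ^ (z - n) := by
    calc ((n:ℝ) + 1) ^ (z - n) ≤ (2 * z) ^ (z - n) :=
          Real.rpow_le_rpow (by positivity) (by linarith) (by linarith)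
      _ = 2 ^ (z - n) * z ^ (z - n) := Real.mul_rpow (by norm_num) hz0.le
      _ ≤ 2 * z ^ (z - n) := by
          gcongr
          calc (2:ℝ) ^ (z - n) ≤ 2 ^ (1:ℝ) :=
                Real.rpow_le_rpow_of_exponent_le (by norm_num) (by linarith)
            _ = 2 := by simp
  have h2 : (n:ℝ) ^ (n:ℝ) ≤ z ^ (n:ℝ) := Real.rpow_le_rpow (by positivity) hnz (by positivity)
  have h3 : Real.exp (-n) ≤ Real.exp 1 * Real.exp (-z) := by
    rw [← Real.exp_add]; apply Real.exp_le_exp.mpr; linarith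
  have h4 : √(n:ℝ) ≤ √z := Real.sqrt_le_sqrt hnz
  have h5 : z ^ (n:ℝ) * z ^ (z - n) = z ^ z := by rw [← Real.rpow_add hz0]; ring_nf
  calc Real.Gamma (z + 1) ≤ n.factorial * ((n:ℝ) + 1) ^ (z - n) := hG
    _ ≤ (Real.exp 1 * (√z * (z ^ (n:ℝ) * (Real.exp 1 * Real.exp (-z))))) * (2 * z ^ (z - n)) := by
        apply mul_le_mul _ h1 (by positivity) (by positivity)
        refine hfac.trans ?_
        gcongr
    _ = (2 * Real.exp 1 ^ 2) * ((z ^ (n:ℝ) * z ^ (z - n)) * √z * Real.exp (-z)) := by ring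
    _ = _ := by rw [h5]

lemma aux_gamma_upper_d (d : ℕ) : ∃ C : ℝ, 0 < C ∧ ∀ z : ℝ, 1 ≤ z →
    Real.Gamma (z + d + 1) ≤ C * (z ^ d * (z ^ z * √z * Real.exp (-z))) := by
  induction d with
  | zero => exact ⟨2 * Real.exp 1 ^ 2, by positivity, fun z hz => by simpa using aux_gamma_upper hz⟩
  | succ d ih =>
    obtain ⟨C, hC, h⟩ := ih
    refine ⟨C * (d + 2), by positivity, fun z hz => ?_⟩
    have : z + ((d + 1 : ℕ) : ℝ) + 1 = (z + d + 1) + 1 := by push_cast; ring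
    rw [this, Real.Gamma_add_one (by positivity)]
    have h1 : z + d + 1 ≤ (d + 2) * z := by
      have : (0:ℝ) ≤ d := by positivity
      nlinarith
    calc (z + d + 1) * Real.Gamma (z + d + 1) ≤
        ((d + 2) * z) * (C * (z ^ d * (z ^ z * √z * Real.exp (-z)))) := by
          apply mul_le_mul h1 (h z hz) (Real.Gamma_nonneg_of_nonneg (by positivity)) (by positivity)
      _ = _ := by ring

lemma aux_factor {x a b : ℝ} (hx0 : 0 ≤ x) (hx1 : x ≤ 1) (ha0 : 0 < a) (ha1 : a ≤ 1)
    (hb : 0 < b) :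
    x ^ (a / b) / Real.Gamma (a / b + 1) ≤ (Real.exp (1 / 2) / √a) * (√b * Real.exp (x / b) *
      b ^ (a / b)) * Real.exp (-(x - a) ^ 2 / (4 * b)) := by
  have h1 := aux_factor_exp hx0 hx1 ha0 ha1 hb
  have h2 := aux_gamma_lower (z := a / b) (by positivity)
  have hG : 0 < Real.Gamma (a / b + 1) := Real.Gamma_pos_of_pos (by positivity)
  have hp : 0 < Real.exp (-(1 / 2)) * ((a / b) ^ (a / b) * √(a / b) * Real.exp (-(a / b))) := by
    positivity
  refine (div_le_div₀ (by positivity) h1 hp h2).trans (le_of_eq ?_)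
  rw [Real.div_rpow ha0.le hb.le, Real.sqrt_div ha0.le, sub_div, Real.exp_sub, Real.exp_neg,
    Real.exp_neg (a / b)]
  have : √b ≠ 0 := by positivity
  have : √a ≠ 0 := by positivity
  have : b ^ (a / b) ≠ 0 := by positivity
  have : a ^ (a / b) ≠ 0 := by positivity
  field_simp

lemma aux_kappa_bound (d : ℕ) (s : Fin d → ℝ) (hs : s ∈ SdInt d) :
    ∃ C : ℝ, 0 < C ∧ ∀ b : ℝ, 0 < b → b ≤ 1 → ∀ x ∈ Sd d,
      0 ≤ kappa d s b x ∧ kappa d s b x ≤ C * b ^ (-(d:ℝ) / 2) *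
        ∏ i, Real.exp (-(x i - s i) ^ 2 / (4 * b)) := by
  obtain ⟨C, hC, hCG⟩ := aux_gamma_upper_d d
  obtain ⟨hs0, hs1⟩ := hs
  have hs1' : ∑ i, s i < 1 := by
    refine lt_of_le_of_lt ?_ hs1
    exact Finset.sum_le_sum fun i _ => le_abs_self _
  have hsum0 : 0 ≤ ∑ i, s i := Finset.sum_nonneg fun i _ => (hs0 i).1.le
  set σ := 1 - ∑ i, s i with hσ
  have hσ0 : 0 < σ := by linarith
  have hσ1 : σ ≤ 1 := by linarith
  have hprod : 0 < ∏ i, (Real.exp (1 / 2) / √(s i)) := by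
    apply Finset.prod_pos
    intro i _
    have := (hs0 i).1
    positivity
  refine ⟨C * (Real.exp (1 / 2) / √σ) * ∏ i, (Real.exp (1 / 2) / √(s i)), by positivity, ?_⟩
  intro b hb hb1 x hx
  obtain ⟨hx0, hx1⟩ := hx
  have hx1' : ∑ i, x i ≤ 1 := by
    refine le_trans ?_ hx1
    exact Finset.sum_le_sum fun i _ => le_abs_self _
  have hxs0 : 0 ≤ ∑ i, x i := Finset.sum_nonneg fun i _ => (hx0 i).1
  have harg : ∑ i, (s i / b + 1) + (σ / b + 1) = 1 / b + d + 1 := by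
    rw [Finset.sum_add_distrib, ← Finset.sum_div]
    simp only [Finset.sum_const, Finset.card_univ, Fintype.card_fin, nsmul_eq_mul, mul_one, hσ]
    field_simp
    ring
  have hk : kappa d s b x = Real.Gamma (1 / b + d + 1) *
      ((1 - ∑ i, x i) ^ (σ / b) / Real.Gamma (σ / b + 1)) *
      ∏ i, (x i ^ (s i / b) / Real.Gamma (s i / b + 1)) := by
    simp only [kappa, dirK, ← hσ, add_sub_cancel_right]
    rw [harg, Finset.prod_div_distrib]
    ring
  have hΓ1 : 0 < Real.Gamma (1 / b + d + 1) := Real.Gamma_pos_of_pos (by positivity)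
  have hΓ2 : 0 < Real.Gamma (σ / b + 1) := Real.Gamma_pos_of_pos (by positivity)
  have hΓ3 : ∀ i, 0 < Real.Gamma (s i / b + 1) := fun i => Real.Gamma_pos_of_pos
    (by have := (hs0 i).1; positivity)
  have hx' : 0 ≤ 1 - ∑ i, x i := by linarith
  have hf0 : ∀ i, 0 ≤ x i ^ (s i / b) / Real.Gamma (s i / b + 1) := fun i =>
    div_nonneg (Real.rpow_nonneg (hx0 i).1 _) (hΓ3 i).le
  have hf1 : 0 ≤ (1 - ∑ i, x i) ^ (σ / b) / Real.Gamma (σ / b + 1) :=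
    div_nonneg (Real.rpow_nonneg hx' _) hΓ2.le
  rw [hk]
  refine ⟨mul_nonneg (mul_nonneg hΓ1.le hf1) (Finset.prod_nonneg fun i _ => hf0 i), ?_⟩
  have hA := hCG (1 / b) (by rw [le_div_iff₀ hb]; linarith)
  have hB := aux_factor hx' (by linarith) hσ0 hσ1 hb
  have hB' : (1 - ∑ i, x i) ^ (σ / b) / Real.Gamma (σ / b + 1) ≤ (Real.exp (1 / 2) / √σ) *
      (√b * Real.exp ((1 - ∑ i, x i) / b) * b ^ (σ / b)) := by
    refine hB.trans (mul_le_of_le_one_right (by positivity) ?_)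
    rw [Real.exp_le_one_iff]
    rw [neg_div]
    have : 0 ≤ (1 - ∑ i, x i - σ) ^ 2 / (4 * b) := by positivity
    linarith
  have hD : ∏ i, (x i ^ (s i / b) / Real.Gamma (s i / b + 1)) ≤ ∏ i, ((Real.exp (1 / 2) / √(s i)) *
      (√b * Real.exp (x i / b) * b ^ (s i / b)) * Real.exp (-(x i - s i) ^ 2 / (4 * b))) :=
    Finset.prod_le_prod (fun i _ => hf0 i) fun i _ =>
      aux_factor (hx0 i).1 (hx0 i).2 (hs0 i).1 (hs0 i).2.le hb
  have hD0 : 0 ≤ ∏ i, (x i ^ (s i / b) / Real.Gamma (s i / b + 1)) :=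
    Finset.prod_nonneg fun i _ => hf0 i
  refine (mul_le_mul (mul_le_mul hA hB' hf1 (by positivity)) hD hD0 (by positivity)).trans
    (le_of_eq ?_)
  simp only [Finset.prod_mul_distrib, Finset.prod_const, Finset.card_univ, Fintype.card_fin]
  rw [← Real.exp_sum, ← Real.rpow_sum_of_pos hb, ← Finset.sum_div, ← Finset.sum_div]
  have e1 : Real.exp ((1 - ∑ i, x i) / b) * Real.exp ((∑ i, x i) / b) = Real.exp (1 / b) := by
    rw [← Real.exp_add]; ring_nf
  have e2 : b ^ (σ / b) * b ^ ((∑ i, s i) / b) = b ^ (1 / b) := by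
    rw [← Real.rpow_add hb, hσ]; ring_nf
  have e3 : (1 / b) ^ (1 / b) = (b ^ (1 / b))⁻¹ := by
    rw [one_div, Real.inv_rpow hb.le]
  have e4 : √(1 / b) = (√b)⁻¹ := by rw [one_div, Real.sqrt_inv]
  have e5 : (1 / b) ^ d * √b ^ d = b ^ (-(d:ℝ) / 2) := by
    rw [← mul_pow, one_div, Real.sqrt_eq_rpow, ← Real.rpow_neg_one, ← Real.rpow_add hb,
      ← Real.rpow_mul_natCast hb.le]
    congr 1
    ring
  rw [e3, e4, Real.exp_neg, ← e1, ← e2, ← e5]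
  have : √b ≠ 0 := by positivity
  have : b ^ (σ / b) ≠ 0 := by positivity
  have : b ^ ((∑ i, s i) / b) ≠ 0 := by positivity
  field_simp

lemma aux_Sd_meas (d : ℕ) : MeasurableSet (Sd d) := by
  have : Sd d = (⋂ i, {s : Fin d → ℝ | s i ∈ Set.Icc (0:ℝ) 1}) ∩ {s | ∑ i, |s i| ≤ 1} := by
    ext s; simp [Sd]
  rw [this]
  refine MeasurableSet.inter (MeasurableSet.iInter fun i => ?_) ?_
  · exact measurableSet_Icc.preimage (measurable_pi_apply i)
  · exact measurableSet_le (by fun_prop) measurable_const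

lemma aux_kappa_meas (d : ℕ) (s : Fin d → ℝ) (b : ℝ) : Measurable (kappa d s b) := by
  unfold kappa dirK
  fun_prop

lemma aux_gauss_int {b q : ℝ} (hb : 0 < b) (hq : 0 < q) (a : ℝ) :
    Integrable (fun x : ℝ => Real.exp (-(q / (4 * b)) * (x - a) ^ 2)) ∧
    ∫ x : ℝ, Real.exp (-(q / (4 * b)) * (x - a) ^ 2) = √(4 * π / q) * √b := by
  constructor
  · exact (integrable_exp_neg_mul_sq (b := q / (4 * b)) (by positivity)).comp_sub_right a
  · rw [integral_sub_right_eq_self (fun x : ℝ => Real.exp (-(q / (4 * b)) * x ^ 2)) a,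
      integral_gaussian, ← Real.sqrt_mul (by positivity)]
    congr 1
    field_simp

lemma aux_gprod_int (d : ℕ) (s : Fin d → ℝ) {b q : ℝ} (hb : 0 < b) (hq0 : 0 < q) :
    Integrable (fun x : Fin d → ℝ => ∏ i, Real.exp (-(q / (4 * b)) * (x i - s i) ^ 2)) :=
  Integrable.fintype_prod (f := fun i (x : ℝ) => Real.exp (-(q / (4 * b)) * (x - s i) ^ 2))
      (fun i => (aux_gauss_int hb hq0 (s i)).1)

lemma aux_gprod_val (d : ℕ) (s : Fin d → ℝ) {b q : ℝ} (hb : 0 < b) (hq0 : 0 < q) :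
    ∫ x : Fin d → ℝ, ∏ i, Real.exp (-(q / (4 * b)) * (x i - s i) ^ 2) =
      (√(4 * π / q) * √b) ^ d := by
  rw [integral_fintype_prod_volume_eq_prod
      (f := fun i (x : ℝ) => Real.exp (-(q / (4 * b)) * (x - s i) ^ 2))]
  rw [Finset.prod_congr rfl fun i _ => (aux_gauss_int hb hq0 (s i)).2]
  simp

lemma aux_gprod_lint (d : ℕ) (s : Fin d → ℝ) {b q K : ℝ} (hb : 0 < b) (hq0 : 0 < q) (hK : 0 ≤ K) :
    ∫⁻ x : Fin d → ℝ, ENNReal.ofReal (K * ∏ i, Real.exp (-(q / (4 * b)) * (x i - s i) ^ 2)) =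
      ENNReal.ofReal (K * (√(4 * π / q) * √b) ^ d) := by
  rw [← ofReal_integral_eq_lintegral_ofReal ((aux_gprod_int d s hb hq0).const_mul _)
    (Eventually.of_forall fun x =>
      mul_nonneg hK (Finset.prod_nonneg fun i _ => (Real.exp_pos _).le)),
    integral_const_mul, aux_gprod_val d s hb hq0]

lemma aux_gprod_pow (d : ℕ) (s x : Fin d → ℝ) {b q K k : ℝ} (hK : 0 ≤ K) (h0 : 0 ≤ k) (hq0 : 0 < q)
    (h1 : k ≤ K * ∏ i, Real.exp (-(x i - s i) ^ 2 / (4 * b))) :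
    k ^ q ≤ K ^ q * ∏ i, Real.exp (-(q / (4 * b)) * (x i - s i) ^ 2) := by
  refine (Real.rpow_le_rpow h0 h1 hq0.le).trans (le_of_eq ?_)
  rw [Real.mul_rpow hK (Finset.prod_nonneg fun i _ => (Real.exp_pos _).le)]
  congr 1
  rw [← Real.exp_sum, ← Real.exp_sum, ← Real.exp_mul, Finset.sum_mul]
  congr 1
  apply Finset.sum_congr rfl
  intro i _
  ring

lemma aux_gconst (d : ℕ) {b q C L : ℝ} (hb : 0 < b) (hC : 0 < C) :
    (C * b ^ (-(d:ℝ) / 2)) ^ q * (L * √b) ^ d = C ^ q * L ^ d * b ^ (-(d:ℝ) / 2 * (q - 1)) := by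
  rw [Real.mul_rpow hC.le (Real.rpow_nonneg hb.le _), mul_pow, Real.sqrt_eq_rpow b,
    ← Real.rpow_mul_natCast hb.le, ← Real.rpow_mul hb.le]
  have : b ^ (-(d:ℝ) / 2 * (q - 1)) = b ^ (-(d:ℝ) / 2 * q) * b ^ (1 / 2 * (d:ℝ)) := by
    rw [← Real.rpow_add hb]; ring_nf
  rw [this]; ring

lemma aux_kappa_Lq (d : ℕ) (s : Fin d → ℝ) (hs : s ∈ SdInt d) (q : ℝ) (hq : 1 < q) :
    ∃ C : ℝ, 0 < C ∧ ∀ b : ℝ, 0 < b → b ≤ 1 →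
      ∫⁻ x in Sd d, (ENNReal.ofReal (kappa d s b x)) ^ q ≤
        ENNReal.ofReal (C * b ^ (-(d:ℝ) / 2 * (q - 1))) := by
  obtain ⟨C, hC, h⟩ := aux_kappa_bound d s hs
  have hq0 : 0 < q := by linarith
  have hK : 0 < C ^ q * √(4 * π / q) ^ d :=
    mul_pos (Real.rpow_pos_of_pos hC q) (pow_pos (Real.sqrt_pos.2 (div_pos (by positivity) hq0)) d)
  refine ⟨C ^ q * √(4 * π / q) ^ d, hK, fun b hb hb1 => ?_⟩
  have hKb : 0 ≤ C * b ^ (-(d:ℝ) / 2) := mul_nonneg hC.le (Real.rpow_nonneg hb.le _)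
  rw [← aux_gconst d hb hC, ← aux_gprod_lint d s hb hq0 (Real.rpow_nonneg hKb q)]
  refine le_trans ?_ (setLIntegral_le_lintegral (Sd d) _)
  apply setLIntegral_mono' (aux_Sd_meas d)
  intro x hx
  obtain ⟨h0, h1⟩ := h b hb hb1 x hx
  rw [ENNReal.ofReal_rpow_of_nonneg h0 hq0.le]
  apply ENNReal.ofReal_le_ofReal
  exact aux_gprod_pow d s x hKb h0 hq0 h1

lemma aux_meas_diff {Ω : Type*} {m m0 : MeasurableSpace Ω} (hm : m ≤ m0)
    (ν1 ν2 : @Measure Ω m0) [IsFiniteMeasure ν1] [IsFiniteMeasure ν2] (α M : ℝ) (hM : 0 ≤ M)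
    (h : ∀ A, MeasurableSet[m] A → |ν1.real A - ν2.real A| ≤ α)
    (Y : Ω → ℝ) (hY : Measurable[m] Y) (hY0 : ∀ ω, 0 ≤ Y ω) (hY1 : ∀ ω, Y ω ≤ M) :
    |∫ ω, Y ω ∂ν1 - ∫ ω, Y ω ∂ν2| ≤ M * α := by
  have hYm : Measurable Y := hY.mono hm le_rfl
  have hi : ∀ (ν : Measure Ω) [IsFiniteMeasure ν], Integrable Y ν := fun ν _ =>
    Integrable.of_bound hYm.aestronglyMeasurable M
      (Eventually.of_forall fun ω => by rw [Real.norm_eq_abs, abs_of_nonneg (hY0 ω)]; exact hY1 ω)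
  have hJ : ∀ (ν : Measure Ω) [IsFiniteMeasure ν],
      IntegrableOn (fun t : ℝ => ν.real {a | t ≤ Y a}) (Set.Ioc 0 M) := fun ν _ => by
    have : Antitone (fun t : ℝ => ν.real {a | t ≤ Y a}) := fun t u htu =>
      measureReal_mono (fun a ha => le_trans htu ha)
    exact (this.intervalIntegrable (a := 0) (b := M)).1
  rw [(hi ν1).integral_eq_integral_Ioc_meas_le (Eventually.of_forall hY0) (Eventually.of_forall hY1),
    (hi ν2).integral_eq_integral_Ioc_meas_le (Eventually.of_forall hY0) (Eventually.of_forall hY1),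
    ← integral_sub (hJ ν1) (hJ ν2)]
  have := norm_setIntegral_le_of_norm_le_const (μ := volume) (s := Set.Ioc 0 M) (C := α)
    (f := fun t : ℝ => ν1.real {a | t ≤ Y a} - ν2.real {a | t ≤ Y a}) (by simp)
    (fun t _ => h _ (hY measurableSet_Ici))
  refine this.trans (le_of_eq ?_)
  simp [hM]
  ring

lemma aux_cov_mix {Ω : Type*} {m1 m2 m0 : MeasurableSpace Ω} (h1 : m1 ≤ m0) (h2 : m2 ≤ m0)
    (P : @Measure Ω m0) [IsProbabilityMeasure P] (α M : ℝ) (hM : 0 ≤ M)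
    (h : ∀ A B, MeasurableSet[m1] A → MeasurableSet[m2] B →
      |(P (A ∩ B)).toReal - (P A).toReal * (P B).toReal| ≤ α)
    (Y Z : Ω → ℝ) (hY : Measurable[m1] Y) (hY0 : ∀ ω, 0 ≤ Y ω) (hY1 : ∀ ω, Y ω ≤ M)
    (hZ : Measurable[m2] Z) (hZ0 : ∀ ω, 0 ≤ Z ω) (hZ1 : ∀ ω, Z ω ≤ M) :
    |cov P Y Z| ≤ M * (M * α) := by
  have hYm : Measurable Y := hY.mono h1 le_rfl
  have hYi : Integrable Y P := Integrable.of_bound hYm.aestronglyMeasurable M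
      (Eventually.of_forall fun ω => by rw [Real.norm_eq_abs, abs_of_nonneg (hY0 ω)]; exact hY1 ω)
  have hE : 0 ≤ ∫ ω, Y ω ∂P := integral_nonneg hY0
  have step1 : ∀ B, MeasurableSet[m2] B →
      |∫ ω in B, Y ω ∂P - (∫ ω, Y ω ∂P) * P.real B| ≤ M * α := by
    intro B hB
    have : IsFiniteMeasure (P B • P) := Measure.smul_finite P (measure_ne_top P B)
    have := aux_meas_diff h1 (P.restrict B) (P B • P) α M hM (fun A hA => by
      have := h A B hA hB
      rw [measureReal_restrict_apply (h1 _ hA), measureReal_ennreal_smul_apply]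
      simpa [Measure.real, mul_comm] using this) Y hY hY0 hY1
    rw [integral_smul_measure] at this
    simpa [Measure.real, mul_comm] using this
  have : IsFiniteMeasure (ENNReal.ofReal (∫ ω, Y ω ∂P) • P) :=
    Measure.smul_finite P ENNReal.ofReal_ne_top
  have : IsFiniteMeasure (P.withDensity fun ω => ENNReal.ofReal (Y ω)) :=
    isFiniteMeasure_withDensity_ofReal hYi.2
  have := aux_meas_diff h2 (P.withDensity fun ω => ENNReal.ofReal (Y ω))
    (ENNReal.ofReal (∫ ω, Y ω ∂P) • P) (M * α) M hM (fun B hB => by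
      have h3 := step1 B hB
      rw [measureReal_ennreal_smul_apply, ENNReal.toReal_ofReal hE, Measure.real,
        withDensity_apply _ (h2 _ hB), ← ofReal_integral_eq_lintegral_ofReal hYi.integrableOn
          (Eventually.of_forall hY0), ENNReal.toReal_ofReal (integral_nonneg hY0)]
      exact h3) Z hZ hZ0 hZ1
  rw [integral_smul_measure, ENNReal.toReal_ofReal hE,
    integral_withDensity_eq_integral_toReal_smul (by fun_prop) (by simp)] at this
  simpa [cov, ENNReal.toReal_ofReal (hY0 _)] using this

lemma aux_alpha_bdd {Ω : Type*} [MeasurableSpace Ω] (P : Measure Ω) [IsProbabilityMeasure P]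
    {d : ℕ} (X : ℕ → Ω → (Fin d → ℝ)) (m : ℕ) : ∀ r ∈ {r : ℝ | ∃ k : ℕ, 1 ≤ k ∧ ∃ A B : Set Ω,
    MeasurableSet[⨆ i ∈ Set.Icc 1 k, MeasurableSpace.comap (X i) inferInstance] A ∧
    MeasurableSet[⨆ i ∈ Set.Ici (k + m), MeasurableSpace.comap (X i) inferInstance] B ∧
    r = |(P (A ∩ B)).toReal - (P A).toReal * (P B).toReal|}, r ≤ 1 := by
  rintro r ⟨k, _, A, B, _, _, rfl⟩
  have e1 : (P (A ∩ B)).toReal ≤ 1 := measureReal_le_one (μ := P) (s := A ∩ B)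
  have e2 : (P A).toReal ≤ 1 := measureReal_le_one (μ := P) (s := A)
  have e3 : (P B).toReal ≤ 1 := measureReal_le_one (μ := P) (s := B)
  have := ENNReal.toReal_nonneg (a := P (A ∩ B))
  have := ENNReal.toReal_nonneg (a := P A)
  have := ENNReal.toReal_nonneg (a := P B)
  rw [abs_le]
  constructor <;> nlinarith

lemma aux_alpha_le_one {Ω : Type*} [MeasurableSpace Ω] (P : Measure Ω) [IsProbabilityMeasure P]
    {d : ℕ} (X : ℕ → Ω → (Fin d → ℝ)) (m : ℕ) : alphaMix P X m ≤ 1 :=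
  Real.sSup_le (aux_alpha_bdd P X m) zero_le_one

lemma aux_cov_alpha {Ω : Type*} [MeasurableSpace Ω] (P : Measure Ω) [IsProbabilityMeasure P]
    {d : ℕ} (X : ℕ → Ω → (Fin d → ℝ)) (hmeas : ∀ i, Measurable (X i))
    (hval : ∀ i ω, X i ω ∈ Sd d) (φ : (Fin d → ℝ) → ℝ) (hφ : Measurable φ) (M : ℝ) (hM : 0 ≤ M)
    (h0 : ∀ x ∈ Sd d, 0 ≤ φ x) (h1 : ∀ x ∈ Sd d, φ x ≤ M) (i j : ℕ) (hi : 1 ≤ i) (hij : i < j) :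
    |cov P (fun ω => φ (X i ω)) (fun ω => φ (X j ω))| ≤ M ^ 2 * alphaMix P X (j - i) := by
  have hle : ∀ i, MeasurableSpace.comap (X i) inferInstance ≤ ‹MeasurableSpace Ω› :=
    fun i => (hmeas i).comap_le
  have hm : ∀ i, @Measurable Ω ℝ (MeasurableSpace.comap (X i) inferInstance) _
      (fun ω => φ (X i ω)) := fun i => hφ.comp (comap_measurable (X i))
  have := aux_cov_mix (hle i) (hle j) P (alphaMix P X (j - i)) M hM (fun A B hA hB => by
    apply le_csSup ⟨1, aux_alpha_bdd P X (j - i)⟩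
    refine ⟨i, hi, A, B, ?_, ?_, rfl⟩
    · have : MeasurableSpace.comap (X i) inferInstance ≤
        ⨆ i' ∈ Set.Icc 1 i, MeasurableSpace.comap (X i') inferInstance :=
        le_iSup₂_of_le i ⟨hi, le_rfl⟩ le_rfl
      exact this _ hA
    · have : MeasurableSpace.comap (X j) inferInstance ≤
        ⨆ i' ∈ Set.Ici (i + (j - i)), MeasurableSpace.comap (X i') inferInstance :=
        le_iSup₂_of_le j (by simp; omega) le_rfl
      exact this _ hB) _ _ (hm i) (fun ω => h0 _ (hval i ω)) (fun ω => h1 _ (hval i ω))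
      (hm j) (fun ω => h0 _ (hval j ω)) (fun ω => h1 _ (hval j ω))
  rw [pow_two, mul_assoc]
  exact this

lemma aux_cov_symm {Ω : Type*} [MeasurableSpace Ω] (P : Measure Ω) (Y Z : Ω → ℝ) :
    cov P Y Z = cov P Z Y := by
  simp only [cov, mul_comm]

open scoped ENNReal

lemma aux_max {E : Type*} [MeasurableSpace E] (μ : Measure E) [SigmaFinite μ] {F g φ : E → ℝ≥0∞}
    (hφ : Measurable φ) (hg : μ.withDensity g = μ.withDensity F) (h : φ ≤ᵐ[μ] F) : φ ≤ᵐ[μ] g := by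
  apply ae_le_of_forall_setLIntegral_le_of_sigmaFinite hφ
  intro s hs _
  rw [← withDensity_apply g hs, hg, withDensity_apply F hs]
  exact lintegral_mono_ae (ae_restrict_of_ae h)

lemma aux_env {E : Type*} [MeasurableSpace E] (μ : Measure E) [SigmaFinite μ] {F g : E → ℝ≥0∞}
    (hgm : Measurable g) (hgF : g ≤ F) (hF : ∀ x, F x ≠ ∞) (hg : μ.withDensity g = μ.withDensity F)
    {φ : E × E → ℝ≥0∞} (hφ : Measurable φ) (h : ∀ x y, φ (x, y) ≤ F x * F y) :
    ∀ᵐ z ∂(μ.prod μ), φ z ≤ g z.1 * g z.2 := by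
  have step1 : ∀ x, ∀ᵐ y ∂μ, φ (x, y) ≤ F x * g y := by
    intro x
    by_cases h0 : F x = 0
    · refine Eventually.of_forall fun y => ?_
      have := h x y
      simpa [h0] using this
    · have := aux_max μ (φ := fun y => φ (x, y) / F x) (by fun_prop) hg
        (Eventually.of_forall fun y => by
          rw [ENNReal.div_le_iff h0 (hF x), mul_comm]; exact h x y)
      filter_upwards [this] with y hy
      rwa [ENNReal.div_le_iff h0 (hF x), mul_comm] at hy
  let A : ℚ → Set E := fun t =>
    {x | μ {y | ((Real.toNNReal t : NNReal) : ℝ≥0∞) * g y < φ (x, y)} ≠ 0}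
  have hA : ∀ t, MeasurableSet (A t) := fun t => by
    have hs : MeasurableSet {z : E × E | ((Real.toNNReal t : NNReal) : ℝ≥0∞) * g z.2 < φ z} :=
      measurableSet_lt (by fun_prop) hφ
    exact (measurable_measure_prodMk_left (ν := μ) hs) (measurableSet_singleton 0).compl
  have step2 : ∀ᵐ x ∂μ, ∀ t : ℚ, x ∈ A t → ((Real.toNNReal t : NNReal) : ℝ≥0∞) ≤ g x := by
    rw [ae_all_iff]
    intro t
    have := aux_max μ (φ := (A t).indicator fun _ => ((Real.toNNReal t : NNReal) : ℝ≥0∞))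
      (measurable_const.indicator (hA t)) hg (Eventually.of_forall fun x => by
        by_cases hx : x ∈ A t
        · rw [Set.indicator_of_mem hx]
          by_contra hc
          push Not at hc
          apply hx
          have := step1 x
          rw [ae_iff] at this
          refine measure_mono_null ?_ this
          intro y hy
          simp only [Set.mem_ofPred_eq, not_le] at hy ⊢
          exact lt_of_le_of_lt (mul_le_mul_left hc.le _) hy
        · rw [Set.indicator_of_notMem hx]; exact zero_le)
    filter_upwards [this] with x hx hxA
    rwa [Set.indicator_of_mem hxA] at hx
  have hS : MeasurableSet {z : E × E | φ z ≤ g z.1 * g z.2} :=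
    measurableSet_le hφ (by fun_prop)
  refine (Measure.ae_prod_mem_iff_ae_ae_mem hS).2 ?_
  filter_upwards [step2] with x hx
  have h3 : ∀ᵐ y ∂μ, ∀ t : ℚ, g x < ((Real.toNNReal t : NNReal) : ℝ≥0∞) →
      φ (x, y) ≤ ((Real.toNNReal t : NNReal) : ℝ≥0∞) * g y := by
    rw [ae_all_iff]
    intro t
    by_cases ht : g x < ((Real.toNNReal t : NNReal) : ℝ≥0∞)
    · have : x ∉ A t := fun hc => absurd (hx t hc) (not_le.mpr ht)
      simp only [A, Set.mem_ofPred_eq, not_not] at this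
      have h4 : ∀ᵐ y ∂μ, ¬ (((Real.toNNReal t : NNReal) : ℝ≥0∞) * g y < φ (x, y)) := by
        rw [ae_iff]; simpa using this
      filter_upwards [h4] with y hy _
      exact not_lt.mp hy
    · exact Eventually.of_forall fun y hc => absurd hc ht
  filter_upwards [h3] with y hy
  have hgy : g y ≠ ∞ := ne_top_of_le_ne_top (hF y) (hgF y)
  show φ (x, y) ≤ g x * g y
  by_cases hy0 : g y = 0
  · have hgx : g x < ∞ := lt_of_le_of_lt (hgF x) (hF x).lt_top
    obtain ⟨t, _, ht, _⟩ := ENNReal.lt_iff_exists_rat_btwn.1 hgx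
    have := hy t ht
    simpa [hy0] using this
  · rw [← ENNReal.div_le_iff hy0 hgy]
    apply le_of_forall_gt
    intro c hc
    obtain ⟨t, _, ht, htc⟩ := ENNReal.lt_iff_exists_rat_btwn.1 hc
    refine lt_of_le_of_lt ?_ htc
    rw [ENNReal.div_le_iff hy0 hgy]
    exact hy t ht

lemma aux_density {E : Type*} [MeasurableSpace E] (μ : Measure E) [SigmaFinite μ]
    (S : Set E) (hS : MeasurableSet S) (f : E → ℝ) (hsupp : ∀ x, x ∉ S → f x = 0)
    (fp : E × E → ℝ) (ρ : Measure E) (π₂ : Measure (E × E))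
    (hρ : ρ = μ.withDensity fun x => ENNReal.ofReal (f x))
    (hπ : π₂ = (μ.prod μ).withDensity fun z => ENNReal.ofReal (fp z))
    (h1 : π₂.map Prod.fst = ρ) (h2 : π₂.map Prod.snd = ρ)
    (H : E × E → ℝ≥0∞) (hHm : Measurable H)
    (hH : ∀ᵐ z ∂((μ.prod μ).restrict (S ×ˢ S)), H z = ENNReal.ofReal |fp z - f z.1 * f z.2|)
    (k : E → ℝ≥0∞) (hk : Measurable k) :
    ∫⁻ z, k z.1 * k z.2 ∂π₂ ≤ (∫⁻ x, k x ∂ρ) * (∫⁻ x, k x ∂ρ) +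
        ∫⁻ z in S ×ˢ S, (k z.1 * k z.2) * H z ∂(μ.prod μ) ∧
    (∫⁻ x, k x ∂ρ) * (∫⁻ x, k x ∂ρ) ≤ ∫⁻ z, k z.1 * k z.2 ∂π₂ +
        ∫⁻ z in S ×ˢ S, (k z.1 * k z.2) * H z ∂(μ.prod μ) := by
  obtain ⟨g, hgm, hgF, hg⟩ := exists_measurable_le_withDensity_eq (μ := μ)
    (fun x => ENNReal.ofReal (f x))
  obtain ⟨G, hGm, hGF, hG⟩ := exists_measurable_le_withDensity_eq (μ := μ.prod μ)
    (fun z => ENNReal.ofReal (fp z))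
  have hSS : MeasurableSet (S ×ˢ S) := hS.prod hS
  set V : Set E := {x | g x ≠ 0} with hV
  have hVm : MeasurableSet V := hgm (measurableSet_singleton 0).compl
  have hVV : MeasurableSet (V ×ˢ V) := hVm.prod hVm
  have hfV : ∀ x ∈ V, 0 < f x := by
    intro x hx
    by_contra hc
    have := hgF x
    simp only [ENNReal.ofReal_of_nonpos (not_lt.mp hc)] at this
    exact hx (le_antisymm this zero_le)
  have hVS : V ⊆ S := fun x hx => by
    by_contra hc
    have := hfV x hx
    rw [hsupp x hc] at this
    exact lt_irrefl _ this
  have hVVS : V ×ˢ V ⊆ S ×ˢ S := Set.prod_mono hVS hVS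
  have hρV : ρ Vᶜ = 0 := by
    rw [hρ, ← hg, withDensity_apply _ hVm.compl]
    rw [lintegral_eq_zero_iff hgm]
    filter_upwards [ae_restrict_mem hVm.compl] with x hx
    simpa [V] using hx
  have hG0 : ∀ᵐ z ∂(μ.prod μ), z ∉ V ×ˢ V → G z = 0 := by
    have : π₂ (V ×ˢ V)ᶜ = 0 := by
      have h3 : π₂ (Prod.fst ⁻¹' Vᶜ) = 0 := by
        rw [← Measure.map_apply measurable_fst hVm.compl, h1, hρV]
      have h4 : π₂ (Prod.snd ⁻¹' Vᶜ) = 0 := by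
        rw [← Measure.map_apply measurable_snd hVm.compl, h2, hρV]
      refine measure_mono_null ?_ (measure_union_null h3 h4)
      intro z hz
      simp only [Set.mem_compl_iff, Set.mem_prod, not_and_or] at hz
      exact hz
    rw [hπ, ← hG, withDensity_apply _ hVV.compl, lintegral_eq_zero_iff hGm,
      EventuallyEq, ae_restrict_iff' hVV.compl] at this
    filter_upwards [this] with z hz hzV using hz hzV
  rw [ae_restrict_iff' hSS] at hH
  have key : ∀ z ∈ V ×ˢ V, ENNReal.ofReal (f z.1 * f z.2) =
      ENNReal.ofReal (f z.1) * ENNReal.ofReal (f z.2) := fun z hz =>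
    ENNReal.ofReal_mul (hfV _ hz.1).le
  -- upper
  have up : ∀ᵐ z ∂(μ.prod μ), G z ≤ g z.1 * g z.2 + (S ×ˢ S).indicator H z := by
    obtain ⟨N, hNsub, hNm, hN0⟩ := exists_measurable_superset_of_null (ae_iff.1 hH)
    have h5 := aux_env μ hgm hgF (fun x => ENNReal.ofReal_ne_top) hg
      (φ := (V ×ˢ V \ N).indicator fun z => G z - H z)
      ((hGm.sub hHm).indicator (hVV.diff hNm)) (fun x y => by
        by_cases hz : (x, y) ∈ V ×ˢ V \ N
        · rw [Set.indicator_of_mem hz, tsub_le_iff_right]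
          have hz2 : H (x, y) = ENNReal.ofReal |fp (x, y) - f x * f y| := by
            by_contra hc
            exact hz.2 (hNsub (by
              simp only [Set.mem_ofPred_eq, Classical.not_imp]
              exact ⟨hVVS hz.1, hc⟩))
          rw [hz2]
          refine (hGF (x, y)).trans ?_
          have := key (x, y) hz.1
          simp only at this
          rw [← this]
          refine le_trans (ENNReal.ofReal_le_ofReal ?_) ENNReal.ofReal_add_le
          linarith [le_abs_self (fp (x, y) - f x * f y)]
        · rw [Set.indicator_of_notMem hz]; exact zero_le)
    have hN : ∀ᵐ z ∂(μ.prod μ), z ∉ N := measure_eq_zero_iff_ae_notMem.1 hN0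
    filter_upwards [h5, hN, hG0] with z hz hzN hzG
    by_cases hzV : z ∈ V ×ˢ V
    · rw [Set.indicator_of_mem (Set.mem_sdiff_of_mem hzV hzN), tsub_le_iff_right] at hz
      rwa [Set.indicator_of_mem (hVVS hzV)]
    · rw [hzG hzV]; exact zero_le
  have lo : ∀ᵐ z ∂(μ.prod μ), g z.1 * g z.2 ≤ G z + (S ×ˢ S).indicator H z := by
    have h5 := aux_max (μ.prod μ) (φ := (V ×ˢ V).indicator fun z => g z.1 * g z.2 - H z)
      ((((hgm.comp measurable_fst).mul (hgm.comp measurable_snd)).sub hHm).indicator hVV) hG (by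
        filter_upwards [hH] with z hz
        by_cases hzV : z ∈ V ×ˢ V
        · rw [Set.indicator_of_mem hzV, tsub_le_iff_right, hz (hVVS hzV)]
          refine (mul_le_mul' (hgF z.1) (hgF z.2)).trans ?_
          simp only
          rw [← key z hzV]
          refine le_trans (ENNReal.ofReal_le_ofReal ?_) ENNReal.ofReal_add_le
          linarith [neg_abs_le (fp z - f z.1 * f z.2)]
        · rw [Set.indicator_of_notMem hzV]; exact zero_le)
    filter_upwards [h5] with z hz
    by_cases hzV : z ∈ V ×ˢ V
    · rw [Set.indicator_of_mem hzV, tsub_le_iff_right] at hz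
      rwa [Set.indicator_of_mem (hVVS hzV)]
    · have : g z.1 * g z.2 = 0 := by
        simp only [Set.mem_prod, V, Set.mem_ofPred_eq, not_and_or, not_not] at hzV
        exact mul_eq_zero.2 hzV
      rw [this]; exact zero_le
  have eG : ∫⁻ z, k z.1 * k z.2 ∂π₂ = ∫⁻ z, (k z.1 * k z.2) * G z ∂(μ.prod μ) := by
    rw [hπ, ← hG, lintegral_withDensity_eq_lintegral_mul _ hGm (by fun_prop)]
    simp only [Pi.mul_apply, mul_comm]
  have eg : (∫⁻ x, k x ∂ρ) * (∫⁻ x, k x ∂ρ) =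
      ∫⁻ z, (k z.1 * k z.2) * (g z.1 * g z.2) ∂(μ.prod μ) := by
    rw [hρ, ← hg, lintegral_withDensity_eq_lintegral_mul _ hgm hk,
      ← lintegral_prod_mul (by fun_prop) (by fun_prop)]
    refine lintegral_congr fun z => ?_
    simp only [Pi.mul_apply]
    ring
  have eH : ∫⁻ z in S ×ˢ S, (k z.1 * k z.2) * H z ∂(μ.prod μ) =
      ∫⁻ z, (k z.1 * k z.2) * (S ×ˢ S).indicator H z ∂(μ.prod μ) := by
    rw [← lintegral_indicator hSS]
    refine lintegral_congr fun z => ?_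
    by_cases hz : z ∈ S ×ˢ S <;> simp [hz]
  have hHi : Measurable ((S ×ˢ S).indicator H) := hHm.indicator hSS
  rw [eG, eg, eH]
  constructor
  · rw [← lintegral_add_right _ (by fun_prop)]
    refine lintegral_mono_ae ?_
    filter_upwards [up] with z hz
    rw [← mul_add]
    exact mul_le_mul_right hz _
  · rw [← lintegral_add_right _ (by fun_prop)]
    refine lintegral_mono_ae ?_
    filter_upwards [lo] with z hz
    rw [← mul_add]
    exact mul_le_mul_right hz _

lemma aux_cov_A2 {Ω : Type*} [MeasurableSpace Ω]
    (P : Measure Ω) [IsProbabilityMeasure P] (d : ℕ)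
    (X : ℕ → Ω → (Fin d → ℝ)) (hmeas : ∀ i, Measurable (X i))
    (hval : ∀ i ω, X i ω ∈ Sd d)
    (f : (Fin d → ℝ) → ℝ)
    (hlaw : ∀ i : ℕ, 1 ≤ i →
      Measure.map (X i) P = volume.withDensity fun x => ENNReal.ofReal (f x))
    (hsupp : ∀ x, x ∉ Sd d → f x = 0)
    (p q : ℝ) (hp : 2 < p) (hq1 : 1 < q) (hpq : 1 / p + 1 / q = 1)
    (hA2 : AssumpA2 P X f p) (s : Fin d → ℝ) (hs : s ∈ SdInt d) :
    ∃ C : ℝ, 0 < C ∧ ∀ b : ℝ, 0 < b → b ≤ 1 → ∀ i j : ℕ, 1 ≤ i → 1 ≤ j → i ≠ j →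
      |cov P (fun ω => kappa d s b (X i ω)) (fun ω => kappa d s b (X j ω))| ≤
        C * b ^ (-(d:ℝ) / p) := by
  obtain ⟨fp, hpair, hint, C0, hC0⟩ := hA2
  obtain ⟨C1, hC1, hLq⟩ := aux_kappa_Lq d s hs q hq1
  obtain ⟨C2, hC2, hbd⟩ := aux_kappa_bound d s hs
  have hp0 : 0 < p := by linarith
  have hq0 : 0 < q := by linarith
  refine ⟨(|C0| + 1) * C1 ^ (2 / q), by positivity, ?_⟩
  intro b hb hb1 i j hi hj hij
  have hSm := aux_Sd_meas d
  have hkm := aux_kappa_meas d s b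
  have hconj : q.HolderConjugate p := by
    rw [Real.holderConjugate_iff]
    exact ⟨hq1, by simpa [one_div, add_comm] using hpq⟩
  set k : (Fin d → ℝ) → ℝ≥0∞ := fun x => ENNReal.ofReal (kappa d s b x) with hk
  have hkmeas : Measurable k := by fun_prop
  -- measurable version of the dependence function
  have hI := hint i j hi hj hij
  have hae : AEMeasurable (fun z : (Fin d → ℝ) × (Fin d → ℝ) =>
      ENNReal.ofReal |fp i j z - f z.1 * f z.2|) (volume.restrict (Sd d ×ˢ Sd d)) := by
    have h1 := (hI.aemeasurable.ennreal_ofReal).pow_const (1 / p)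
    refine h1.congr (Eventually.of_forall fun z => ?_)
    simp only
    rw [ENNReal.ofReal_rpow_of_nonneg (by positivity) (by positivity), ← Real.rpow_mul (abs_nonneg _),
      mul_one_div_cancel hp0.ne', Real.rpow_one]
  set H := hae.mk with hHdef
  have hHm : Measurable H := hae.measurable_mk
  have hH := hae.ae_eq_mk
  have hpm : Measurable fun ω => (X i ω, X j ω) := (hmeas i).prodMk (hmeas j)
  obtain ⟨hup, hlo⟩ := aux_density (volume : Measure (Fin d → ℝ)) (Sd d) hSm f hsupp (fp i j)
    (Measure.map (X i) P) (Measure.map (fun ω => (X i ω, X j ω)) P) (hlaw i hi)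
    (hpair i j hi hj hij) (by rw [Measure.map_map measurable_fst hpm]; rfl)
    (by
      rw [Measure.map_map measurable_snd hpm, hlaw i hi, ← hlaw j hj]; rfl)
    H hHm (by
      filter_upwards [hH] with z hz
      exact hz.symm) k hkmeas
  -- Holder bound
  have hD : ∫⁻ z in Sd d ×ˢ Sd d, (k z.1 * k z.2) * H z
      ∂((volume : Measure (Fin d → ℝ)).prod volume) ≤
      ENNReal.ofReal ((|C0| + 1) * C1 ^ (2 / q) * b ^ (-(d:ℝ) / p)) := by
    have hh := ENNReal.lintegral_mul_le_Lp_mul_Lq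
      (((volume : Measure (Fin d → ℝ)).prod volume).restrict (Sd d ×ˢ Sd d)) hconj
      (f := fun z => k z.1 * k z.2) (g := H) (by fun_prop) hHm.aemeasurable
    refine le_trans hh ?_
    have e1 : ∫⁻ z in Sd d ×ˢ Sd d, (k z.1 * k z.2) ^ q
        ∂((volume : Measure (Fin d → ℝ)).prod volume) =
        (∫⁻ x in Sd d, k x ^ q) * (∫⁻ x in Sd d, k x ^ q) := by
      rw [← Measure.prod_restrict, ← lintegral_prod_mul (by fun_prop) (by fun_prop)]
      exact lintegral_congr fun z => ENNReal.mul_rpow_of_nonneg _ _ hq0.le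
    have e2 : (∫⁻ z in Sd d ×ˢ Sd d, H z ^ p
        ∂((volume : Measure (Fin d → ℝ)).prod volume)) ^ (1 / p) ≤ ENNReal.ofReal (|C0| + 1) := by
      have e3 : ∫⁻ z in Sd d ×ˢ Sd d, H z ^ p ∂((volume : Measure (Fin d → ℝ)).prod volume) =
          ENNReal.ofReal (∫ z in Sd d ×ˢ Sd d, |fp i j z - f z.1 * f z.2| ^ p) := by
        rw [ofReal_integral_eq_lintegral_ofReal hI (Eventually.of_forall fun z => by
          simp only [Pi.zero_apply]; positivity)]
        refine lintegral_congr_ae ?_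
        filter_upwards [hH] with z hz
        have hz2 : H z = ENNReal.ofReal |fp i j z - f z.1 * f z.2| := hz.symm
        rw [hz2, ENNReal.ofReal_rpow_of_nonneg (abs_nonneg _) hp0.le]
      rw [e3, ENNReal.ofReal_rpow_of_nonneg (integral_nonneg fun z => by positivity) (by positivity)]
      apply ENNReal.ofReal_le_ofReal
      exact (hC0 i j hi hj hij).trans ((le_abs_self _).trans (by linarith))
    have e4 : ((∫⁻ x in Sd d, k x ^ q) * (∫⁻ x in Sd d, k x ^ q)) ^ (1 / q) ≤
        ENNReal.ofReal (C1 ^ (2 / q) * b ^ (-(d:ℝ) / p)) := by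
      have e5 := hLq b hb hb1
      refine (ENNReal.rpow_le_rpow (mul_le_mul' e5 e5) (by positivity)).trans (le_of_eq ?_)
      rw [← ENNReal.ofReal_mul (by positivity), ENNReal.ofReal_rpow_of_nonneg (by positivity)
        (by positivity)]
      congr 1
      rw [← pow_two, ← Real.rpow_natCast, ← Real.rpow_mul (by positivity),
        Real.mul_rpow hC1.le (by positivity), ← Real.rpow_mul hb.le]
      have hpe : 1 / p = 1 - 1 / q := by linarith
      have e6 : -(d:ℝ) / p = -(d:ℝ) / 2 * (q - 1) * ((2:ℕ) * (1 / q)) := by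
        rw [div_eq_mul_one_div (-(d:ℝ)) p, hpe]
        push_cast
        field_simp
      rw [e6]
      congr 2
      push_cast
      ring
    rw [e1]
    refine (mul_le_mul' e4 e2).trans (le_of_eq ?_)
    rw [← ENNReal.ofReal_mul (by positivity)]
    congr 1
    ring
  -- convert to reals
  have hk0 : ∀ i ω, 0 ≤ kappa d s b (X i ω) := fun i ω => (hbd b hb hb1 _ (hval i ω)).1
  have hk1 : ∀ i ω, kappa d s b (X i ω) ≤ C2 * b ^ (-(d:ℝ) / 2) := fun i ω => by
    refine (hbd b hb hb1 _ (hval i ω)).2.trans (mul_le_of_le_one_right (by positivity) ?_)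
    refine Finset.prod_le_one (fun _ _ => by positivity) fun l _ => ?_
    rw [Real.exp_le_one_iff, neg_div]
    have : 0 ≤ (X i ω l - s l) ^ 2 / (4 * b) := by positivity
    linarith
  have hki : ∀ i, Integrable (fun ω => kappa d s b (X i ω)) P := fun i =>
    Integrable.of_bound (hkm.comp (hmeas i)).aestronglyMeasurable _
      (Eventually.of_forall fun ω => by
        rw [Real.norm_eq_abs, abs_of_nonneg (hk0 i ω)]; exact hk1 i ω)
  have hkki : Integrable (fun ω => kappa d s b (X i ω) * kappa d s b (X j ω)) P :=
    Integrable.of_bound (((hkm.comp (hmeas i)).mul (hkm.comp (hmeas j))).aestronglyMeasurable)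
      ((C2 * b ^ (-(d:ℝ) / 2)) * (C2 * b ^ (-(d:ℝ) / 2)))
      (Eventually.of_forall fun ω => by
        rw [Real.norm_eq_abs, abs_of_nonneg (mul_nonneg (hk0 i ω) (hk0 j ω))]
        exact mul_le_mul (hk1 i ω) (hk1 j ω) (hk0 j ω) (by positivity))
  have r1 : ∀ i, ∫⁻ x, k x ∂(Measure.map (X i) P) =
      ENNReal.ofReal (∫ ω, kappa d s b (X i ω) ∂P) := fun i => by
    rw [lintegral_map hkmeas (hmeas i), ofReal_integral_eq_lintegral_ofReal (hki i)
      (Eventually.of_forall (hk0 i))]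
  have r1j : ∫⁻ x, k x ∂(Measure.map (X i) P) =
      ENNReal.ofReal (∫ ω, kappa d s b (X j ω) ∂P) := by
    rw [hlaw i hi, ← hlaw j hj, r1 j]
  have r2 : ∫⁻ z, k z.1 * k z.2 ∂(Measure.map (fun ω => (X i ω, X j ω)) P) =
      ENNReal.ofReal (∫ ω, kappa d s b (X i ω) * kappa d s b (X j ω) ∂P) := by
    rw [lintegral_map (by fun_prop) hpm, ofReal_integral_eq_lintegral_ofReal hkki
      (Eventually.of_forall fun ω => mul_nonneg (hk0 i ω) (hk0 j ω))]
    exact lintegral_congr fun ω => (ENNReal.ofReal_mul (hk0 i ω)).symm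
  have n1 : 0 ≤ ∫ ω, kappa d s b (X i ω) ∂P := integral_nonneg (hk0 i)
  have n2 : 0 ≤ ∫ ω, kappa d s b (X j ω) ∂P := integral_nonneg (hk0 j)
  have n3 : 0 ≤ ∫ ω, kappa d s b (X i ω) * kappa d s b (X j ω) ∂P :=
    integral_nonneg fun ω => mul_nonneg (hk0 i ω) (hk0 j ω)
  have r3 : (∫⁻ x, k x ∂(Measure.map (X i) P)) * (∫⁻ x, k x ∂(Measure.map (X i) P)) =
      ENNReal.ofReal ((∫ ω, kappa d s b (X i ω) ∂P) * ∫ ω, kappa d s b (X j ω) ∂P) := by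
    rw [ENNReal.ofReal_mul n1, ← r1 i, ← r1j]
  have n4 : 0 ≤ (|C0| + 1) * C1 ^ (2 / q) * b ^ (-(d:ℝ) / p) := by positivity
  have u1 := hup.trans (add_le_add le_rfl hD)
  have u2 := hlo.trans (add_le_add le_rfl hD)
  rw [r2, r3, ← ENNReal.ofReal_add (by positivity) n4,
    ENNReal.ofReal_le_ofReal_iff (by positivity)] at u1
  rw [r2, r3, ← ENNReal.ofReal_add n3 n4, ENNReal.ofReal_le_ofReal_iff (by positivity)] at u2
  rw [cov, abs_le]
  constructor <;> linarith

lemma aux_tail (ν : ℝ) (hν : 2 < ν) (β n : ℕ) (hβ : 1 ≤ β) :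
    ∑ m ∈ Finset.Ioc β n, (m:ℝ) ^ (-ν) ≤ (β:ℝ) ^ (1 - ν) := by
  have hβ0 : (0:ℝ) < β := by exact_mod_cast hβ
  rcases le_or_gt β n with h | h
  · calc ∑ m ∈ Finset.Ioc β n, (m:ℝ) ^ (-ν)
        ≤ ∑ m ∈ Finset.Ioc β n, (β:ℝ) ^ (2 - ν) * ((m:ℝ) ^ 2)⁻¹ := by
          apply Finset.sum_le_sum
          intro m hm
          rw [Finset.mem_Ioc] at hm
          have hm' : (β:ℝ) ≤ m := by exact_mod_cast hm.1.le
          have hm0 : (0:ℝ) < m := by linarith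
          have : (m:ℝ) ^ (-ν) = (m:ℝ) ^ (2 - ν) * ((m:ℝ) ^ 2)⁻¹ := by
            rw [← Real.rpow_natCast, ← Real.rpow_neg hm0.le, ← Real.rpow_add hm0]
            congr 1
            push_cast
            ring
          rw [this]
          gcongr ?_ * _
          exact Real.rpow_le_rpow_of_nonpos hβ0 hm' (by linarith)
      _ = (β:ℝ) ^ (2 - ν) * ∑ m ∈ Finset.Ioc β n, ((m:ℝ) ^ 2)⁻¹ := by rw [Finset.mul_sum]
      _ ≤ (β:ℝ) ^ (2 - ν) * (β:ℝ)⁻¹ := by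
          gcongr
          refine (sum_Ioc_inv_sq_le_sub (by omega) h).trans ?_
          have : (0:ℝ) ≤ (n:ℝ)⁻¹ := by positivity
          linarith
      _ = (β:ℝ) ^ (1 - ν) := by
          rw [← Real.rpow_neg_one, ← Real.rpow_add hβ0]
          congr 1
          ring
  · rw [Finset.Ioc_eq_empty (by omega), Finset.sum_empty]
    positivity

lemma aux_sum (c : ℕ → ℕ → ℝ) (n β : ℕ) (hβ : 1 ≤ β) (ν T1 T2 : ℝ) (hν : 2 < ν)
    (hT1 : 0 ≤ T1) (hT2 : 0 ≤ T2)
    (h1 : ∀ i j, 1 ≤ i → 1 ≤ j → i ≠ j → |c i j| ≤ T1)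
    (h2 : ∀ i j, 1 ≤ i → i < j → |c i j| ≤ T2 * ((j - i : ℕ) : ℝ) ^ (-ν))
    (hc : ∀ i j, c i j = c j i) :
    |∑ i ∈ Finset.Icc 1 n, ∑ j ∈ Finset.Icc 1 n, if i ≠ j then c i j else 0| ≤
      n * (2 * (β * T1 + T2 * (β:ℝ) ^ (1 - ν))) := by
  set w : ℕ → ℝ := fun m => if m ≤ β then T1 else T2 * (m:ℝ) ^ (-ν) with hw
  have hw0 : ∀ m, 0 ≤ w m := fun m => by
    simp only [hw]; split_ifs <;> positivity
  have hW : ∑ m ∈ Finset.Icc 1 n, w m ≤ β * T1 + T2 * (β:ℝ) ^ (1 - ν) := by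
    have : Finset.Icc 1 n ⊆ Finset.Icc 1 β ∪ Finset.Ioc β n := by
      intro m; simp only [Finset.mem_union, Finset.mem_Icc, Finset.mem_Ioc]; omega
    refine (Finset.sum_le_sum_of_subset_of_nonneg this fun m _ _ => hw0 m).trans ?_
    rw [Finset.sum_union (by
      rw [Finset.disjoint_left]; intro m; simp only [Finset.mem_Icc, Finset.mem_Ioc]; omega)]
    apply add_le_add
    · rw [Finset.sum_congr rfl (g := fun _ => T1) (fun m hm => by
        simp [hw, (Finset.mem_Icc.1 hm).2])]
      simp
    · rw [Finset.sum_congr rfl (g := fun m : ℕ => T2 * (m:ℝ) ^ (-ν)) (fun m hm => by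
        have := (Finset.mem_Ioc.1 hm).1
        simp [hw, not_le.mpr this]), ← Finset.mul_sum]
      exact mul_le_mul_of_nonneg_left (aux_tail ν hν β n hβ) hT2
  have hcw : ∀ i j, 1 ≤ i → i < j → |c i j| ≤ w (j - i) := fun i j hi hij => by
    simp only [hw]
    split_ifs
    · exact h1 i j hi (by omega) (by omega)
    · exact h2 i j hi hij
  have hrow : ∀ i ∈ Finset.Icc 1 n,
      |∑ j ∈ Finset.Icc 1 n, if i ≠ j then c i j else 0| ≤ 2 * ∑ m ∈ Finset.Icc 1 n, w m := by
    intro i hi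
    rw [Finset.mem_Icc] at hi
    refine (Finset.abs_sum_le_sum_abs _ _).trans ?_
    calc ∑ j ∈ Finset.Icc 1 n, |if i ≠ j then c i j else 0|
        ≤ ∑ j ∈ Finset.Icc 1 n, ((if i < j then w (j - i) else 0) +
            (if j < i then w (i - j) else 0)) := by
          apply Finset.sum_le_sum
          intro j hj
          rw [Finset.mem_Icc] at hj
          rcases lt_trichotomy i j with h | h | h
          · simp [h, h.ne, not_lt.mpr h.le, hcw i j hi.1 h]
          · simp [h]
          · simp only [h.ne', ne_eq, not_false_eq_true, if_true, not_lt.mpr h.le, if_false, h, zero_add]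
            rw [hc]; exact hcw j i hj.1 h
      _ = ∑ j ∈ Finset.Icc 1 n with i < j, w (j - i) + ∑ j ∈ Finset.Icc 1 n with j < i, w (i - j) := by
          rw [Finset.sum_add_distrib, Finset.sum_filter, Finset.sum_filter]
      _ ≤ ∑ m ∈ Finset.Icc 1 n, w m + ∑ m ∈ Finset.Icc 1 n, w m := by
          apply add_le_add
          · rw [← Finset.sum_image (g := fun j => j - i) (f := w) (by
              intro a ha b' hb' hab
              simp only [Finset.coe_filter, Finset.mem_Icc, Set.mem_ofPred_eq] at ha hb'
              simp only at hab
              omega)]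
            apply Finset.sum_le_sum_of_subset_of_nonneg
            · intro m
              simp only [Finset.mem_image, Finset.mem_filter, Finset.mem_Icc]
              rintro ⟨a, ha, rfl⟩
              omega
            · exact fun m _ _ => hw0 m
          · rw [← Finset.sum_image (g := fun j => i - j) (f := w) (by
              intro a ha b' hb' hab
              simp only [Finset.coe_filter, Finset.mem_Icc, Set.mem_ofPred_eq] at ha hb'
              simp only at hab
              omega)]
            apply Finset.sum_le_sum_of_subset_of_nonneg
            · intro m
              simp only [Finset.mem_image, Finset.mem_filter, Finset.mem_Icc]
              rintro ⟨a, ha, rfl⟩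
              omega
            · exact fun m _ _ => hw0 m
      _ = _ := by ring
  refine (Finset.abs_sum_le_sum_abs _ _).trans ?_
  refine (Finset.sum_le_sum hrow).trans ?_
  simp only [Finset.sum_const, Nat.card_Icc, add_tsub_cancel_right, nsmul_eq_mul]
  gcongr

lemma aux_alpha_all {Ω : Type*} [MeasurableSpace Ω] (P : Measure Ω) [IsProbabilityMeasure P]
    {d : ℕ} (X : ℕ → Ω → (Fin d → ℝ)) (ν : ℝ) (hν : 0 < ν)
    (hA3 : (fun m : ℕ => alphaMix P X m) =O[atTop] fun m : ℕ => (m : ℝ) ^ (-ν)) :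
    ∃ c : ℝ, 0 < c ∧ ∀ m : ℕ, 1 ≤ m → alphaMix P X m ≤ c * (m:ℝ) ^ (-ν) := by
  obtain ⟨c, hc, h⟩ := hA3.exists_pos
  obtain ⟨N, hN⟩ := eventually_atTop.1 h.bound
  refine ⟨c + ((N:ℝ) + 1) ^ ν, by positivity, fun m hm => ?_⟩
  have hm0 : (0:ℝ) < m := by exact_mod_cast hm
  rw [add_mul]
  rcases le_or_gt N m with h1 | h1
  · have := hN m h1
    rw [Real.norm_eq_abs, Real.norm_eq_abs, abs_of_nonneg (a := (m:ℝ) ^ (-ν)) (by positivity)] at this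
    have h2 : 0 ≤ ((N:ℝ) + 1) ^ ν * (m:ℝ) ^ (-ν) := by positivity
    linarith [le_abs_self (alphaMix P X m)]
  · have h2 : 1 ≤ ((N:ℝ) + 1) ^ ν * (m:ℝ) ^ (-ν) := by
      rw [Real.rpow_neg hm0.le, ← div_eq_mul_inv, one_le_div (by positivity)]
      have : (m:ℝ) ≤ N := by exact_mod_cast h1.le
      exact Real.rpow_le_rpow hm0.le (by linarith) hν.le
    have h3 : 0 ≤ c * (m:ℝ) ^ (-ν) := by positivity
    linarith [aux_alpha_le_one P X m]

/-- Total off-diagonal covariance sum is `O_s(n b^{-d(1/p+1/(νq))})`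
and `o_s(n b^{-d/2})`. -/
theorem total_off_diagonal_cov_sum {Ω : Type*} [MeasurableSpace Ω]
    (P : Measure Ω) [IsProbabilityMeasure P] (d : ℕ) (hd : 1 ≤ d)
    (X : ℕ → Ω → (Fin d → ℝ)) (hmeas : ∀ i, Measurable (X i))
    (hval : ∀ i ω, X i ω ∈ Sd d)
    (hstat : IsStrictlyStationary P X)
    (f : (Fin d → ℝ) → ℝ)
    (hlaw : ∀ i : ℕ, 1 ≤ i →
      Measure.map (X i) P = volume.withDensity fun x => ENNReal.ofReal (f x))
    (hsupp : ∀ x, x ∉ Sd d → f x = 0)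
    (p q : ℝ) (hp : 2 < p) (hq1 : 1 < q) (hq2 : q < 2) (hpq : 1 / p + 1 / q = 1)
    (hA2 : AssumpA2 P X f p)
    (ν : ℝ) (hν : 2 * (p - 1) / (p - 2) < ν)
    (hA3 : (fun m : ℕ => alphaMix P X m) =O[atTop] fun m : ℕ => (m : ℝ) ^ (-ν))
    (s : Fin d → ℝ) (hs : s ∈ SdInt d)
    (b : ℕ → ℝ) (hbpos : ∀ n, 0 < b n) (hb0 : Tendsto b atTop (𝓝 0)) :
    (fun n : ℕ => ∑ i ∈ Finset.Icc 1 n, ∑ j ∈ Finset.Icc 1 n,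
        if i ≠ j then
          cov P (fun ω => kappa d s (b n) (X i ω)) (fun ω => kappa d s (b n) (X j ω))
        else 0)
      =O[atTop]
      (fun n : ℕ => (n : ℝ) * (b n) ^ (-(d : ℝ) * (1 / p + 1 / (ν * q)))) ∧
    (fun n : ℕ => ∑ i ∈ Finset.Icc 1 n, ∑ j ∈ Finset.Icc 1 n,
        if i ≠ j then
          cov P (fun ω => kappa d s (b n) (X i ω)) (fun ω => kappa d s (b n) (X j ω))
        else 0)
      =o[atTop] (fun n : ℕ => (n : ℝ) * (b n) ^ (-(d : ℝ) / 2)) := by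
  have hp0 : 0 < p := by linarith
  have hq0 : 0 < q := by linarith
  have hν2 : 2 < ν := by
    refine lt_trans ?_ hν
    rw [lt_div_iff₀ (by linarith)]
    linarith
  have hν0 : 0 < ν := by linarith
  have hd0 : (0:ℝ) < d := by exact_mod_cast hd
  obtain ⟨A, hA, hcovA⟩ := aux_cov_A2 P d X hmeas hval f hlaw hsupp p q hp hq1 hpq hA2 s hs
  obtain ⟨C2, hC2, hbd⟩ := aux_kappa_bound d s hs
  obtain ⟨c, hc, hα⟩ := aux_alpha_all P X ν hν0 hA3
  have hb1 : ∀ᶠ n in atTop, b n ≤ 1 := (hb0.eventually_lt_const one_pos).mono fun n h => h.le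
  have hO : (fun n : ℕ => ∑ i ∈ Finset.Icc 1 n, ∑ j ∈ Finset.Icc 1 n,
        if i ≠ j then
          cov P (fun ω => kappa d s (b n) (X i ω)) (fun ω => kappa d s (b n) (X j ω))
        else 0)
      =O[atTop]
      (fun n : ℕ => (n : ℝ) * (b n) ^ (-(d : ℝ) * (1 / p + 1 / (ν * q)))) := by
    apply IsBigO.of_bound (2 * (2 * A + C2 ^ 2 * c))
    filter_upwards [hb1] with n hn1
    have hb := hbpos n
    set B := b n with hB
    have hsup : ∀ x ∈ Sd d, kappa d s B x ≤ C2 * B ^ (-(d:ℝ) / 2) := fun x hx => by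
      refine (hbd B hb hn1 x hx).2.trans (mul_le_of_le_one_right (by positivity) ?_)
      refine Finset.prod_le_one (fun _ _ => by positivity) fun l _ => ?_
      rw [Real.exp_le_one_iff, neg_div]
      have : 0 ≤ (x l - s l) ^ 2 / (4 * B) := by positivity
      linarith
    set e := B ^ (-(d:ℝ) / (ν * q)) with he
    have he1 : 1 ≤ e := by
      apply Real.one_le_rpow_of_pos_of_le_one_of_nonpos hb hn1
      rw [neg_div]
      have : 0 ≤ (d:ℝ) / (ν * q) := by positivity
      linarith
    have hβ1 : 1 ≤ ⌈e⌉₊ := Nat.one_le_ceil_iff.2 (by linarith)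
    have hβe : e ≤ (⌈e⌉₊ : ℝ) := Nat.le_ceil e
    have hβ2 : (⌈e⌉₊ : ℝ) ≤ 2 * e := by
      have := Nat.ceil_lt_add_one (a := e) (by linarith)
      linarith
    have hBd : (B ^ (-(d:ℝ) / 2)) ^ 2 = B ^ (-(d:ℝ)) := by
      rw [← Real.rpow_natCast, ← Real.rpow_mul hb.le]
      congr 1
      push_cast
      ring
    have key := aux_sum
      (fun i j => cov P (fun ω => kappa d s B (X i ω)) (fun ω => kappa d s B (X j ω)))
      n ⌈e⌉₊ hβ1 ν (A * B ^ (-(d:ℝ) / p)) (C2 ^ 2 * c * B ^ (-(d:ℝ))) hν2 (by positivity)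
      (by positivity) (fun i j hi hj hij => hcovA B hb hn1 i j hi hj hij)
      (fun i j hi hij => by
        have h1 := aux_cov_alpha P X hmeas hval (kappa d s B) (aux_kappa_meas d s B)
          (C2 * B ^ (-(d:ℝ) / 2)) (by positivity) (fun x hx => (hbd B hb hn1 x hx).1) hsup i j hi hij
        refine h1.trans ?_
        have h2 := hα (j - i) (by omega)
        refine (mul_le_mul_of_nonneg_left h2 (by positivity)).trans (le_of_eq ?_)
        rw [mul_pow, hBd]
        ring)
      (fun i j => aux_cov_symm P _ _)
    rw [Real.norm_eq_abs, Real.norm_eq_abs, abs_of_nonneg (a := (n:ℝ) * _) (by positivity)]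
    refine key.trans ?_
    have g1 : e * B ^ (-(d:ℝ) / p) = B ^ (-(d : ℝ) * (1 / p + 1 / (ν * q))) := by
      rw [he, ← Real.rpow_add hb]
      congr 1
      ring
    have g2 : B ^ (-(d:ℝ)) * e ^ (1 - ν) = B ^ (-(d : ℝ) * (1 / p + 1 / (ν * q))) := by
      rw [he, ← Real.rpow_mul hb.le, ← Real.rpow_add hb]
      congr 1
      have : 1 / p = 1 - 1 / q := by linarith
      rw [this]
      field_simp
      ring
    have g3 : ((⌈e⌉₊ : ℕ) : ℝ) ^ (1 - ν) ≤ e ^ (1 - ν) :=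
      Real.rpow_le_rpow_of_nonpos (by linarith) hβe (by linarith)
    calc (n:ℝ) * (2 * ((⌈e⌉₊ : ℝ) * (A * B ^ (-(d:ℝ) / p)) +
          C2 ^ 2 * c * B ^ (-(d:ℝ)) * (⌈e⌉₊ : ℝ) ^ (1 - ν)))
        ≤ (n:ℝ) * (2 * ((2 * e) * (A * B ^ (-(d:ℝ) / p)) +
          C2 ^ 2 * c * B ^ (-(d:ℝ)) * e ^ (1 - ν))) := by gcongr
      _ = (n:ℝ) * (2 * (2 * A * (e * B ^ (-(d:ℝ) / p)) +
          C2 ^ 2 * c * (B ^ (-(d:ℝ)) * e ^ (1 - ν)))) := by ring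
      _ = _ := by rw [g1, g2]; ring
  refine ⟨hO, hO.trans_isLittleO ?_⟩
  apply IsBigO.mul_isLittleO (isBigO_refl _ _)
  have hexp : 0 < (d:ℝ) * (1 / 2 - (1 / p + 1 / (ν * q))) := by
    apply mul_pos hd0
    have h1 : 2 * (p - 1) < ν * (p - 2) := by
      rwa [div_lt_iff₀ (by linarith)] at hν
    have h2 : 1 / q = (p - 1) / p := by
      have : 1 / q = 1 - 1 / p := by linarith
      rw [this]; field_simp
    have h3 : 1 / (ν * q) = (p - 1) / (p * ν) := by
      rw [one_div, mul_inv, ← one_div q, h2]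
      field_simp
    rw [h3]
    have : 1 / 2 - (1 / p + (p - 1) / (p * ν)) = (ν * (p - 2) - 2 * (p - 1)) / (2 * p * ν) := by
      field_simp
      ring
    rw [this]
    apply div_pos (by linarith) (by positivity)
  have hlim : Tendsto (fun n => b n ^ ((d:ℝ) * (1 / 2 - (1 / p + 1 / (ν * q))))) atTop (𝓝 0) := by
    have := hb0.rpow_const (p := (d:ℝ) * (1 / 2 - (1 / p + 1 / (ν * q)))) (Or.inr hexp.le)
    rwa [Real.zero_rpow hexp.ne'] at this
  rw [isLittleO_iff_tendsto (fun n h => absurd h (Real.rpow_pos_of_pos (hbpos n) _).ne')]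
  refine hlim.congr fun n => ?_
  rw [← Real.rpow_sub (hbpos n)]
  congr 1
  ring
end

section
/- Let d ∈ ℕ, let X be an S_d-valued random vector whose density f is bounded on S_d, and let s ∈ Int(S_d). Then, as b → 0, Var{κ_{s,b}(X)} ≤ E{κ_{s,b}²(X)} ≪_s b^{−d/2}, where the implied constant may depend on s, d, and ‖f‖_∞. -/
open MeasureTheory Filter Asymptotics Real Topology

theorem aux_fact_up (n : ℕ) (hn : 1 ≤ n) :
    (n.factorial : ℝ) ≤ Real.exp 1 * √n * Real.exp (n * Real.log n - n) := by
  obtain ⟨k, rfl⟩ : ∃ k, n = k + 1 := ⟨n - 1, by omega⟩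
  have h := Stirling.stirlingSeq'_antitone (Nat.zero_le k)
  simp only [Function.comp, Nat.succ_eq_add_one, zero_add, Stirling.stirlingSeq_one] at h
  unfold Stirling.stirlingSeq at h
  have hp : (0 : ℝ) < ((k + 1 : ℕ) : ℝ) := by positivity
  rw [div_le_iff₀ (by positivity)] at h
  have e : ((k + 1 : ℕ) : ℝ) ^ (k+1) = Real.exp ((k + 1 : ℕ) * Real.log (k + 1 : ℕ)) := by
    rw [mul_comm, Real.exp_mul, Real.exp_log hp, Real.rpow_natCast]
  have e2 : Real.exp 1 ^ (k+1) = Real.exp ((k+1 : ℕ)) := by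
    rw [← Real.exp_nat_mul, mul_one]
  rw [div_pow, e, e2, ← Real.exp_sub, Real.sqrt_mul (by norm_num)] at h
  refine h.trans (le_of_eq ?_)
  field_simp

theorem aux_fact_low (n : ℕ) (hn : 1 ≤ n) :
    √n * Real.exp (n * Real.log n - n) ≤ (n.factorial : ℝ) := by
  have h := Stirling.le_factorial_stirling n
  have hp : (0 : ℝ) < (n : ℝ) := by positivity
  have e : (n : ℝ) ^ n = Real.exp (n * Real.log n) := by
    rw [mul_comm, Real.exp_mul, Real.exp_log hp, Real.rpow_natCast]
  have e2 : Real.exp 1 ^ n = Real.exp n := by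
    rw [← Real.exp_nat_mul, mul_one]
  rw [div_pow, e, e2, ← Real.exp_sub] at h
  refine le_trans ?_ h
  gcongr
  nlinarith [Real.pi_gt_three]

theorem aux_gamma_step (y θ : ℝ) (hy : 0 < y) (h0 : 0 ≤ θ) (h1 : θ < 1) :
    Real.Gamma (y + θ) ≤ Real.Gamma y * y ^ θ := by
  rcases h0.eq_or_lt with rfl | h0
  · simp
  have h := Real.Gamma_mul_add_mul_le_rpow_Gamma_mul_rpow_Gamma (s := y) (t := y + 1)
    (a := 1 - θ) (b := θ) hy (by linarith) (by linarith) h0 (by ring)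
  have hG := Real.Gamma_pos_of_pos hy
  rw [Real.Gamma_add_one hy.ne', Real.mul_rpow hy.le hG.le] at h
  calc Real.Gamma (y + θ) = Real.Gamma ((1 - θ) * y + θ * (y + 1)) := by ring_nf
    _ ≤ _ := h
    _ = (Real.Gamma y ^ (1 - θ) * Real.Gamma y ^ θ) * y ^ θ := by ring
    _ = _ := by rw [← Real.rpow_add hG]; simp

theorem aux_log_succ (z y : ℝ) (hz : 1 ≤ z) (hy : 0 < y) (h : y ≤ z + 1) :
    Real.log y ≤ Real.log z + 1 := by
  have : Real.log y ≤ Real.log (2 * z) := Real.log_le_log hy (by linarith)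
  rw [Real.log_mul (by norm_num) (by linarith)] at this
  have := Real.log_two_lt_d9
  linarith

theorem aux_gamma_up (z : ℝ) (hz : 1 ≤ z) :
    Real.Gamma (z + 1) ≤ Real.exp 3 * √z * Real.exp (z * Real.log z - z) := by
  have hm1 : 1 ≤ ⌊z⌋₊ := Nat.one_le_floor_iff z |>.2 hz
  have hmz : (⌊z⌋₊ : ℝ) ≤ z := Nat.floor_le (by linarith)
  have hzm : z < ⌊z⌋₊ + 1 := Nat.lt_floor_add_one z
  generalize ⌊z⌋₊ = m at *
  have hmR : (1 : ℝ) ≤ m := by exact_mod_cast hm1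
  have h := aux_gamma_step (m + 1) (z - m) (by linarith) (by linarith) (by linarith)
  rw [Real.Gamma_nat_eq_factorial] at h
  have hf := aux_fact_up m hm1
  have hl := aux_log_succ z (m + 1) hz (by linarith) (by linarith)
  have hl2 : Real.log m ≤ Real.log z := Real.log_le_log (by linarith) hmz
  calc Real.Gamma (z + 1) = Real.Gamma (m + 1 + (z - m)) := by ring_nf
    _ ≤ _ := h
    _ ≤ (Real.exp 1 * √m * Real.exp (m * Real.log m - m)) *
        Real.exp (Real.log (m + 1) * (z - m)) := by
        rw [Real.rpow_def_of_pos (by linarith)]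
        gcongr
    _ = √m * Real.exp (1 + (m * Real.log m - m) + Real.log (m + 1) * (z - m)) := by
        rw [Real.exp_add, Real.exp_add]; ring
    _ ≤ √z * Real.exp (3 + (z * Real.log z - z)) := by
        refine mul_le_mul (Real.sqrt_le_sqrt hmz) (Real.exp_le_exp.2 ?_) (Real.exp_pos _).le
          (Real.sqrt_nonneg _)
        nlinarith [mul_nonneg (sub_nonneg.2 hl) (sub_nonneg.2 hmz)]
    _ = _ := by rw [Real.exp_add]; ring

theorem aux_gamma_low (z : ℝ) (hz : 1 ≤ z) :
    √z * Real.exp (z * Real.log z - z - 2) ≤ Real.Gamma (z + 1) := by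
  have hmz : z ≤ (⌈z⌉₊ : ℝ) := Nat.le_ceil z
  have hzm : (⌈z⌉₊ : ℝ) < z + 1 := Nat.ceil_lt_add_one (by linarith)
  generalize ⌈z⌉₊ = m at *
  have hmR : (1 : ℝ) ≤ m := by linarith
  have hm1 : 1 ≤ m := by exact_mod_cast hmR
  have h := aux_gamma_step (z + 1) (m - z) (by linarith) (by linarith) (by linarith)
  rw [show z + 1 + (m - z) = (m : ℝ) + 1 by ring, Real.Gamma_nat_eq_factorial] at h
  have hf := aux_fact_low m hm1
  have hl := aux_log_succ z (z + 1) hz (by linarith) (by linarith)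
  have hl2 : Real.log z ≤ Real.log m := Real.log_le_log (by linarith) hmz
  rw [Real.rpow_def_of_pos (by linarith)] at h
  have hE := Real.exp_pos (Real.log (z + 1) * (m - z))
  refine le_of_mul_le_mul_right (le_trans ?_ h) hE
  refine le_trans ?_ hf
  rw [mul_assoc, ← Real.exp_add]
  gcongr
  nlinarith [mul_nonneg (sub_nonneg.2 hl) (sub_nonneg.2 hmz)]

theorem aux_gamma_shift (d : ℕ) (n : ℝ) (hn : 1 ≤ n) :
    Real.Gamma (n + d + 1) ≤ ((d + 1) * n) ^ d * Real.Gamma (n + 1) := by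
  suffices H : ∀ k : ℕ, k ≤ d → Real.Gamma (n + k + 1) ≤ ((d + 1) * n) ^ k * Real.Gamma (n + 1) from
    H d le_rfl
  intro k
  induction k with
  | zero => simp
  | succ k ih =>
    intro hk
    have ih := ih (by omega)
    have hkd : (k : ℝ) + 1 ≤ d := by exact_mod_cast hk
    have hk0 : (0 : ℝ) ≤ k := by positivity
    push_cast
    rw [show n + ((k : ℝ) + 1) + 1 = (n + k + 1) + 1 by ring, Real.Gamma_add_one (by positivity),
      pow_succ]
    have : n + k + 1 ≤ (d + 1) * n := by nlinarith
    have hG : 0 < Real.Gamma (n + k + 1) := Real.Gamma_pos_of_pos (by positivity)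
    calc (n + k + 1) * Real.Gamma (n + k + 1) ≤ ((d + 1) * n) * (((d + 1) * n) ^ k * Real.Gamma (n + 1)) := by
          gcongr
      _ = _ := by ring

/-- pointwise bounds -/
theorem aux_pt (s x n : ℝ) (hs : 0 < s) (hs1 : s ≤ 1) (hx : 0 ≤ x) (hx1 : x ≤ 1) (hn : 0 < n) :
    x ^ (s * n) ≤ s ^ (s * n) * Real.exp (n * ((x - s) - (x - s) ^ 2 / 4)) := by
  rcases hx.eq_or_lt with rfl | hx
  · rw [Real.zero_rpow (by positivity)]; positivity
  rw [Real.rpow_def_of_pos hx, Real.rpow_def_of_pos hs, ← Real.exp_add]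
  apply Real.exp_le_exp.2
  have h1 : s * (Real.log x - Real.log s) ≤ (x - s) - (x - s) ^ 2 / 4 := by
    have ha : 0 < √x := Real.sqrt_pos.2 hx
    have hc : 0 < √s := Real.sqrt_pos.2 hs
    have ex : √x ^ 2 = x := Real.sq_sqrt hx.le
    have es : √s ^ 2 = s := Real.sq_sqrt hs.le
    have ha1 : √x ≤ 1 := Real.sqrt_le_one.2 hx1
    have hc1 : √s ≤ 1 := Real.sqrt_le_one.2 hs1
    rw [← ex, ← es]
    generalize √x = a at *
    generalize √s = c at *
    have hl := Real.log_le_sub_one_of_pos (div_pos ha hc)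
    rw [Real.log_div ha.ne' hc.ne'] at hl
    rw [Real.log_pow, Real.log_pow]
    push_cast
    have h2 : c ^ 2 * (2 * Real.log a - 2 * Real.log c) ≤ 2 * (a * c - c ^ 2) := by
      have : c ^ 2 * (Real.log a - Real.log c) ≤ c ^ 2 * (a / c - 1) := by gcongr
      have e : c ^ 2 * (a / c - 1) = a * c - c ^ 2 := by field_simp
      linarith
    have h3 : (a ^ 2 - c ^ 2) ^ 2 ≤ 4 * (a - c) ^ 2 := by
      have : (a + c) ^ 2 ≤ 4 := by nlinarith
      nlinarith [mul_le_mul_of_nonneg_right this (sq_nonneg (a - c))]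
    nlinarith
  nlinarith

theorem aux_pt' (s x n : ℝ) (hs : 0 < s) (hx : 0 ≤ x) (hn : 0 < n) (hs1 : s ≤ 1) (hx1 : x ≤ 1) :
    x ^ (s * n) ≤ s ^ (s * n) * Real.exp (n * (x - s)) := by
  refine (aux_pt s x n hs hs1 hx hx1 hn).trans ?_
  refine mul_le_mul_of_nonneg_left (Real.exp_le_exp.2 ?_) (by positivity)
  exact mul_le_mul_of_nonneg_left (by nlinarith [sq_nonneg (x - s)]) hn.le

theorem aux_factor_s13 (s b : ℝ) (hs : 0 < s) (hb : 0 < b) (hsb : b ≤ s) :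
    s ^ (s / b) / Real.Gamma (s / b + 1) ≤
      (Real.exp 2 / √s) * √b * Real.exp ((s / b) * (1 + Real.log b)) := by
  have hz : 1 ≤ s / b := by rw [le_div_iff₀ hb]; linarith
  have h := aux_gamma_low (s / b) hz
  have h2 : 0 < √(s / b) * Real.exp (s / b * Real.log (s / b) - s / b - 2) := by positivity
  calc s ^ (s / b) / Real.Gamma (s / b + 1)
      ≤ s ^ (s / b) / (√(s / b) * Real.exp (s / b * Real.log (s / b) - s / b - 2)) := by gcongr
    _ = _ := by
      rw [Real.rpow_def_of_pos hs, Real.log_div hs.ne' hb.ne', Real.sqrt_div hs.le]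
      have hsb : √b ≠ 0 := (Real.sqrt_pos.2 hb).ne'
      have hss : √s ≠ 0 := (Real.sqrt_pos.2 hs).ne'
      rw [div_eq_iff (by positivity)]
      rw [show Real.exp 2 / √s * √b * Real.exp (s / b * (1 + Real.log b)) * (√s / √b * Real.exp (s / b * (Real.log s - Real.log b) - s / b - 2)) = (Real.exp 2 * Real.exp (s / b * (1 + Real.log b)) * Real.exp (s / b * (Real.log s - Real.log b) - s / b - 2)) by field_simp]
      rw [← Real.exp_add, ← Real.exp_add]
      congr 1
      ring

theorem aux_K (d : ℕ) (s : Fin d → ℝ) (hs : ∀ i, 0 < s i) (h0 : 0 < 1 - ∑ i, s i) :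
    ∃ C : ℝ, 0 ≤ C ∧ ∀ b : ℝ, 0 < b → b ≤ 1 → (∀ i, b ≤ s i) → b ≤ 1 - ∑ i, s i →
      kappa d s b s ≤ C * (√b ^ d)⁻¹ := by
  set s0 := 1 - ∑ i, s i with hs0
  refine ⟨Real.exp 3 * ((d : ℝ) + 1) ^ d * (Real.exp 2 / √s0) * ∏ i, (Real.exp 2 / √(s i)),
    by positivity, ?_⟩
  intro b hb hb1 hbs hb0
  have hn : 1 ≤ 1 / b := by rw [le_div_iff₀ hb]; linarith
  have e1 : ∑ i, (s i / b + 1) + (s0 / b + 1) = 1 / b + d + 1 := by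
    rw [Finset.sum_add_distrib, ← Finset.sum_div, hs0]
    simp
    field_simp
    ring
  have hG : Real.Gamma (∑ i, (s i / b + 1) + (s0 / b + 1)) ≤
      ((d + 1) * (1 / b)) ^ d * (Real.exp 3 * √(1 / b) * Real.exp (1 / b * Real.log (1 / b) - 1 / b)) := by
    rw [e1]
    refine (aux_gamma_shift d (1 / b) hn).trans ?_
    gcongr
    exact aux_gamma_up _ hn
  have hP : ∏ i, (s i ^ (s i / b) / Real.Gamma (s i / b + 1)) ≤
      ∏ i, ((Real.exp 2 / √(s i)) * √b * Real.exp ((s i / b) * (1 + Real.log b))) := by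
    apply Finset.prod_le_prod
    · intro i _
      have := hs i
      have := Real.Gamma_pos_of_pos (show 0 < s i / b + 1 by positivity)
      positivity
    · intro i _
      exact aux_factor_s13 _ _ (hs i) hb (hbs i)
  have hP0 := aux_factor_s13 s0 b h0 hb hb0
  rw [Finset.prod_mul_distrib, Finset.prod_mul_distrib, ← Real.exp_sum, Finset.prod_const,
    ← Finset.sum_mul, ← Finset.sum_div, Finset.card_univ, Fintype.card_fin] at hP
  have hPn : 0 ≤ ∏ i, (s i ^ (s i / b) / Real.Gamma (s i / b + 1)) := by
    apply Finset.prod_nonneg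
    intro i _
    have := hs i
    have := Real.Gamma_pos_of_pos (show 0 < s i / b + 1 by positivity)
    positivity
  have hG0 := Real.Gamma_pos_of_pos (show 0 < s0 / b + 1 by positivity)
  have hk : kappa d s b s = Real.Gamma (∑ i, (s i / b + 1) + (s0 / b + 1)) *
      ((s0 ^ (s0 / b) / Real.Gamma (s0 / b + 1)) *
        ∏ i, (s i ^ (s i / b) / Real.Gamma (s i / b + 1))) := by
    unfold kappa dirK
    rw [Finset.prod_div_distrib]
    simp only [add_sub_cancel_right, ← hs0]
    have : ∏ i, Real.Gamma (s i / b + 1) ≠ 0 := by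
      refine Finset.prod_ne_zero_iff.2 fun i _ => ?_
      have := hs i
      exact (Real.Gamma_pos_of_pos (show 0 < s i / b + 1 by positivity)).ne'
    field_simp
  rw [hk]
  calc _ ≤ (((d + 1) * (1 / b)) ^ d * (Real.exp 3 * √(1 / b) * Real.exp (1 / b * Real.log (1 / b) - 1 / b))) *
        (((Real.exp 2 / √s0) * √b * Real.exp ((s0 / b) * (1 + Real.log b))) *
        ((∏ i, (Real.exp 2 / √(s i))) * √b ^ d * Real.exp ((∑ i, s i) / b * (1 + Real.log b)))) := by
        gcongr
    _ = (Real.exp 3 * ((d : ℝ) + 1) ^ d * (Real.exp 2 / √s0) * ∏ i, (Real.exp 2 / √(s i))) *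
        ((1 / b) ^ d * √b ^ d * (√(1 / b) * √b)) *
        (Real.exp (1 / b * Real.log (1 / b) - 1 / b) * Real.exp ((s0 / b) * (1 + Real.log b)) *
          Real.exp ((∑ i, s i) / b * (1 + Real.log b))) := by
        rw [mul_pow]; ring
    _ = _ := by
        rw [← Real.exp_add, ← Real.exp_add]
        have e2 : 1 / b * Real.log (1 / b) - 1 / b + s0 / b * (1 + Real.log b) +
            (∑ i, s i) / b * (1 + Real.log b) = 0 := by
          rw [one_div b, Real.log_inv, hs0]; field_simp; ring
        have hsb : 0 < √b := Real.sqrt_pos.2 hb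
        have e3 : √(1 / b) * √b = 1 := by
          rw [← Real.sqrt_mul (by positivity)]; field_simp; simp
        have e4 : (1 / b) ^ d * √b ^ d = (√b ^ d)⁻¹ := by
          rw [← mul_pow, ← inv_pow]
          congr 1
          nth_rw 1 [← Real.mul_self_sqrt hb.le]
          field_simp
        rw [e2, e3, e4]; simp

theorem aux_kappa_le (d : ℕ) (s : Fin d → ℝ) (hs : ∀ i, 0 < s i) (hs1 : ∀ i, s i ≤ 1)
    (h0 : 0 < 1 - ∑ i, s i) (b : ℝ) (hb : 0 < b) (x : Fin d → ℝ) (hx : x ∈ Sd d) :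
    0 ≤ kappa d s b x ∧
    kappa d s b x ≤ kappa d s b s * ∏ i, Real.exp (-(1 / (4 * b)) * (x i - s i) ^ 2) := by
  obtain ⟨hxi, hxs⟩ := hx
  have hx0 : 0 ≤ 1 - ∑ i, x i := by
    have : ∑ i, x i ≤ ∑ i, |x i| := Finset.sum_le_sum fun i _ => le_abs_self _
    linarith
  have hx0' : 0 ≤ ∑ i, x i := Finset.sum_nonneg fun i _ => (hxi i).1
  have hs0' : 0 ≤ ∑ i, s i := Finset.sum_nonneg fun i _ => (hs i).le
  unfold kappa dirK
  simp only [add_sub_cancel_right]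
  have hc : 0 ≤ Real.Gamma (∑ i, (s i / b + 1) + ((1 - ∑ i, s i) / b + 1)) /
      (Real.Gamma ((1 - ∑ i, s i) / b + 1) * ∏ i, Real.Gamma (s i / b + 1)) := by
    refine div_nonneg (Real.Gamma_nonneg_of_nonneg ?_) (mul_nonneg (Real.Gamma_nonneg_of_nonneg ?_)
      (Finset.prod_nonneg fun i _ => Real.Gamma_nonneg_of_nonneg ?_))
    · refine add_nonneg (Finset.sum_nonneg fun i _ => ?_) ?_
      · have := hs i
        positivity
      · positivity
    · positivity
    · have := hs i
      positivity
  generalize Real.Gamma (∑ i, (s i / b + 1) + ((1 - ∑ i, s i) / b + 1)) /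
      (Real.Gamma ((1 - ∑ i, s i) / b + 1) * ∏ i, Real.Gamma (s i / b + 1)) = c at *
  have hpx : 0 ≤ ∏ i, x i ^ (s i / b) := Finset.prod_nonneg fun i _ => Real.rpow_nonneg (hxi i).1 _
  refine ⟨by positivity, ?_⟩
  have h1 : (1 - ∑ i, x i) ^ ((1 - ∑ i, s i) / b) ≤ (1 - ∑ i, s i) ^ ((1 - ∑ i, s i) / b) *
      Real.exp (1 / b * ((1 - ∑ i, x i) - (1 - ∑ i, s i))) := by
    have := aux_pt' (1 - ∑ i, s i) (1 - ∑ i, x i) (1 / b) h0 hx0 (by positivity)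
      (by linarith) (by linarith)
    simpa only [mul_one_div] using this
  have h2 : ∏ i, x i ^ (s i / b) ≤ ∏ i, (s i ^ (s i / b) *
      Real.exp (1 / b * ((x i - s i) - (x i - s i) ^ 2 / 4))) := by
    apply Finset.prod_le_prod
    · exact fun i _ => Real.rpow_nonneg (hxi i).1 _
    · intro i _
      have := aux_pt (s i) (x i) (1 / b) (hs i) (hs1 i) (hxi i).1 (hxi i).2 (by positivity)
      simpa only [mul_one_div] using this
  rw [Finset.prod_mul_distrib, ← Real.exp_sum] at h2
  rw [← Real.exp_sum]
  calc _ ≤ c * ((1 - ∑ i, s i) ^ ((1 - ∑ i, s i) / b) *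
      Real.exp (1 / b * ((1 - ∑ i, x i) - (1 - ∑ i, s i)))) * ((∏ i, s i ^ (s i / b)) *
        Real.exp (∑ i, (1 / b * ((x i - s i) - (x i - s i) ^ 2 / 4)))) := by gcongr
    _ = c * (1 - ∑ i, s i) ^ ((1 - ∑ i, s i) / b) * (∏ i, s i ^ (s i / b)) *
        (Real.exp (1 / b * ((1 - ∑ i, x i) - (1 - ∑ i, s i))) *
        Real.exp (∑ i, (1 / b * ((x i - s i) - (x i - s i) ^ 2 / 4)))) := by ring
    _ = _ := by
      rw [← Real.exp_add]
      congr 2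
      rw [← Finset.mul_sum, Finset.sum_sub_distrib, Finset.sum_sub_distrib, ← Finset.sum_div,
        ← Finset.mul_sum]
      field_simp
      ring

theorem aux_gauss (d : ℕ) (s : Fin d → ℝ) (b : ℝ) (hb : 0 < b) :
    Integrable (fun x : Fin d → ℝ => ∏ i, Real.exp (-(1 / (2 * b)) * (x i - s i) ^ 2)) ∧
    ∫ x : Fin d → ℝ, ∏ i, Real.exp (-(1 / (2 * b)) * (x i - s i) ^ 2) = (√(2 * π) * √b) ^ d := by
  constructor
  · apply Integrable.fintype_prod (f := fun i (v : ℝ) ↦ Real.exp (-(1 / (2 * b)) * (v - s i) ^ 2))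
    intro i
    exact (integrable_exp_neg_mul_sq (by positivity)).comp_sub_right (s i)
  · rw [MeasureTheory.integral_fintype_prod_volume_eq_prod
      (fun i (v : ℝ) ↦ Real.exp (-(1 / (2 * b)) * (v - s i) ^ 2))]
    have : ∀ i : Fin d, ∫ v : ℝ, Real.exp (-(1 / (2 * b)) * (v - s i) ^ 2) = √(2 * π) * √b := by
      intro i
      rw [integral_sub_right_eq_self (fun v : ℝ => Real.exp (-(1 / (2 * b)) * v ^ 2)) (s i),
        integral_gaussian, ← Real.sqrt_mul (by positivity)]
      congr 1
      field_simp
    rw [Finset.prod_congr rfl fun i _ => this i, Finset.prod_const, Finset.card_univ, Fintype.card_fin]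

/-- Variance bound: `Var{κ_{s,b}(X)} ≤ E{κ_{s,b}²(X)} ≪_s b^{-d/2}`. -/
theorem dirichlet_kernel_variance_bound {Ω : Type*} [MeasurableSpace Ω]
    (P : Measure Ω) [IsProbabilityMeasure P] (d : ℕ) (hd : 1 ≤ d)
    (X : Ω → (Fin d → ℝ)) (hmeas : Measurable X) (hval : ∀ ω, X ω ∈ Sd d)
    (f : (Fin d → ℝ) → ℝ)
    (hlaw : Measure.map X P = volume.withDensity fun x => ENNReal.ofReal (f x))
    (hsupp : ∀ x, x ∉ Sd d → f x = 0)
    (hbdd : ∃ M : ℝ, ∀ x, |f x| ≤ M)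
    (s : Fin d → ℝ) (hs : s ∈ SdInt d) :
    (∀ b : ℝ, 0 < b →
      (∫ ω, (kappa d s b (X ω)) ^ 2 ∂P) - (∫ ω, kappa d s b (X ω) ∂P) ^ 2 ≤
        ∫ ω, (kappa d s b (X ω)) ^ 2 ∂P) ∧
    (fun b : ℝ => ∫ ω, (kappa d s b (X ω)) ^ 2 ∂P)
      =O[𝓝[>] (0 : ℝ)] (fun b : ℝ => b ^ (-(d : ℝ) / 2)) := by
  refine ⟨fun b _ => by nlinarith [sq_nonneg (∫ ω, kappa d s b (X ω) ∂P)], ?_⟩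
  obtain ⟨M, hM⟩ := hbdd
  have hM0 : 0 ≤ M := (abs_nonneg _).trans (hM 0)
  obtain ⟨hsi, hss⟩ := hs
  have hpos : ∀ i, 0 < s i := fun i => (hsi i).1
  have h0 : 0 < 1 - ∑ i, s i := by
    have : ∑ i, s i ≤ ∑ i, |s i| := Finset.sum_le_sum fun i _ => le_abs_self _
    linarith
  obtain ⟨C, hC, hK⟩ := aux_K d s hpos h0
  have hle : Measure.map X P ≤ ENNReal.ofReal M • (volume : Measure (Fin d → ℝ)) := by
    rw [hlaw, ← withDensity_const]
    exact withDensity_mono (ae_of_all _ fun x =>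
      ENNReal.ofReal_le_ofReal ((le_abs_self _).trans (hM x)))
  have hev : ∀ a : ℝ, 0 < a → ∀ᶠ b : ℝ in 𝓝[>] (0 : ℝ), b ≤ a := fun a ha =>
    nhdsWithin_le_nhds (Iic_mem_nhds ha)
  refine IsBigO.of_bound (C ^ 2 * M * √(2 * π) ^ d) ?_
  filter_upwards [self_mem_nhdsWithin, hev 1 one_pos, hev _ h0,
    Filter.eventually_all.2 fun i => hev (s i) (hpos i)] with b hb hb1 hb0 hbs
  have hb : 0 < b := hb
  have hk := hK b hb hb1 hbs hb0
  have hks : 0 ≤ kappa d s b s := (aux_kappa_le d s hpos (fun i => (hsi i).2.le) h0 b hb s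
    ⟨fun i => ⟨(hsi i).1.le, (hsi i).2.le⟩, hss.le⟩).1
  obtain ⟨gi, ge⟩ := aux_gauss d s b hb
  set g : (Fin d → ℝ) → ℝ := fun x => ∏ i, Real.exp (-(1 / (2 * b)) * (x i - s i) ^ 2) with hg
  have hg0 : ∀ x, 0 ≤ g x := fun x => Finset.prod_nonneg fun i _ => (Real.exp_pos _).le
  have giM : Integrable g (ENNReal.ofReal M • (volume : Measure (Fin d → ℝ))) :=
    gi.smul_measure ENNReal.ofReal_ne_top
  have gim : Integrable g (Measure.map X P) := giM.mono_measure hle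
  have giX : Integrable (fun ω => g (X ω)) P := gim.comp_measurable hmeas
  have hsb : 0 < √b := Real.sqrt_pos.2 hb
  have hpt : ∀ ω, kappa d s b (X ω) ^ 2 ≤ kappa d s b s ^ 2 * g (X ω) := by
    intro ω
    obtain ⟨k0, k1⟩ := aux_kappa_le d s hpos (fun i => (hsi i).2.le) h0 b hb (X ω) (hval ω)
    refine (pow_le_pow_left₀ k0 k1 2).trans (le_of_eq ?_)
    rw [mul_pow, ← Finset.prod_pow]
    congr 1
    refine Finset.prod_congr rfl fun i _ => ?_
    rw [← Real.exp_nat_mul]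
    congr 1
    push_cast
    field_simp
    ring
  have hint : ∫ ω, kappa d s b (X ω) ^ 2 ∂P ≤ kappa d s b s ^ 2 * (M * (√(2 * π) * √b) ^ d) := by
    calc _ ≤ ∫ ω, kappa d s b s ^ 2 * g (X ω) ∂P :=
          integral_mono_of_nonneg (ae_of_all _ fun ω => sq_nonneg _) (giX.const_mul _)
            (ae_of_all _ hpt)
      _ = kappa d s b s ^ 2 * ∫ x, g x ∂(Measure.map X P) := by
          rw [integral_const_mul, integral_map hmeas.aemeasurable gim.aestronglyMeasurable]
      _ ≤ kappa d s b s ^ 2 * ∫ x, g x ∂(ENNReal.ofReal M • (volume : Measure (Fin d → ℝ))) := by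
          refine mul_le_mul_of_nonneg_left ?_ (sq_nonneg _)
          exact integral_mono_measure hle (ae_of_all _ hg0) giM
      _ = _ := by
          rw [integral_smul_measure, ge, ENNReal.toReal_ofReal hM0, smul_eq_mul]
  rw [Real.norm_of_nonneg (integral_nonneg fun ω => sq_nonneg _),
    Real.norm_of_nonneg (Real.rpow_nonneg hb.le _)]
  have hbp : b ^ (-(d : ℝ) / 2) = (√b ^ d)⁻¹ := by
    rw [Real.sqrt_eq_rpow, ← Real.rpow_natCast, ← Real.rpow_mul hb.le, ← Real.rpow_neg hb.le]
    congr 1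
    ring
  rw [hbp]
  calc _ ≤ _ := hint
    _ ≤ (C * (√b ^ d)⁻¹) ^ 2 * (M * (√(2 * π) * √b) ^ d) := by gcongr
    _ = _ := by rw [mul_pow (√(2 * π))]; field_simp
end
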